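/- arXiv:2012.11141 — 4 statements merged into one kernel-verified Lean document; each statement's English description precedes it below -/
import Mathlib

section
/- For every real a > 0 and every positive integer n, there exists a C² function φ : ℝ → ℝ satisfying φ''(r) + (2r/(r²+a²))·φ'(r) = sin(2·φ(r)) for all r ∈ ℝ, with lim_{r→−∞} φ(r) = 0 and lim_{r→+∞} φ(r) = n·π. -/
open Real Filter

/-- The vector field of the first-order system. -/
noncomputable def vf (a t : ℝ) (x : ℝ × ℝ) : ℝ × ℝ :=
  (x.2, Real.sin (2 * x.1) - 2 * t / (t ^ 2 + a ^ 2) * x.2)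

/-- A global solution of the first-order system. -/
def Sol (a : ℝ) (φ ψ : ℝ → ℝ) : Prop :=
  (∀ r, HasDerivAt φ (ψ r) r) ∧
    ∀ r, HasDerivAt ψ (Real.sin (2 * φ r) - 2 * r / (r ^ 2 + a ^ 2) * ψ r) r

lemma abs_sin_sub_le (x y : ℝ) : |Real.sin x - Real.sin y| ≤ |x - y| := by
  have h : LipschitzWith 1 Real.sin := by
    apply lipschitzWith_of_nnnorm_deriv_le Real.differentiable_sin
    intro x
    rw [Real.deriv_sin, ← NNReal.coe_le_coe]
    simpa using Real.abs_cos_le_one x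
  simpa [Real.dist_eq] using h.dist_le_mul x y

lemma damp_le (a : ℝ) (ha : 0 < a) (t : ℝ) : |2 * t / (t ^ 2 + a ^ 2)| ≤ 1 / a := by
  have h : 0 < t ^ 2 + a ^ 2 := by positivity
  rw [abs_div, abs_of_pos h, div_le_div_iff₀ h ha, abs_mul]
  simp only [abs_two]
  nlinarith [sq_nonneg (|t| - a), sq_abs t]

lemma vf_lip (a : ℝ) (ha : 0 < a) (t : ℝ) :
    LipschitzWith (2 + (1 / a).toNNReal) (vf a t) := by
  apply LipschitzWith.of_dist_le_mul
  intro x y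
  have hK : ((2 + (1 / a).toNNReal : NNReal) : ℝ) = 2 + 1 / a := by
    rw [NNReal.coe_add, Real.coe_toNNReal _ (by positivity)]; simp
  rw [hK, Prod.dist_eq, Prod.dist_eq, Real.dist_eq, Real.dist_eq, Real.dist_eq, Real.dist_eq]
  set m := max |x.1 - y.1| |x.2 - y.2| with hm
  have h1 : |x.1 - y.1| ≤ m := le_max_left _ _
  have h2 : |x.2 - y.2| ≤ m := le_max_right _ _
  have hm0 : 0 ≤ m := (abs_nonneg _).trans h1
  have ha' : 0 < 1 / a := by positivity
  apply max_le
  · simp only [vf]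
    nlinarith
  · simp only [vf]
    have e : Real.sin (2 * x.1) - 2 * t / (t ^ 2 + a ^ 2) * x.2 -
        (Real.sin (2 * y.1) - 2 * t / (t ^ 2 + a ^ 2) * y.2) =
        (Real.sin (2 * x.1) - Real.sin (2 * y.1)) - 2 * t / (t ^ 2 + a ^ 2) * (x.2 - y.2) := by
      ring
    rw [e]
    refine (abs_sub _ _).trans ?_
    have h3 := abs_sin_sub_le (2 * x.1) (2 * y.1)
    have h4 : |2 * x.1 - 2 * y.1| = 2 * |x.1 - y.1| := by
      rw [← mul_sub, abs_mul]; simp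
    rw [h4] at h3
    rw [abs_mul]
    have h5 := mul_le_mul (damp_le a ha t) h2 (abs_nonneg _) ha'.le
    linarith

lemma Sol.pair {a : ℝ} {φ ψ : ℝ → ℝ} (h : Sol a φ ψ) (r : ℝ) :
    HasDerivAt (fun r => (φ r, ψ r)) (vf a r (φ r, ψ r)) r :=
  (h.1 r).prodMk (h.2 r)

lemma Sol.unique {a : ℝ} (ha : 0 < a) {φ ψ φ' ψ' : ℝ → ℝ} (h : Sol a φ ψ) (h' : Sol a φ' ψ')
    (r₀ : ℝ) (h1 : φ r₀ = φ' r₀) (h2 : ψ r₀ = ψ' r₀) (r : ℝ) : φ r = φ' r ∧ ψ r = ψ' r := by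
  have := ODE_solution_unique_univ (v := vf a) (s := fun _ => Set.univ) (t₀ := r₀)
    (f := fun r => (φ r, ψ r)) (g := fun r => (φ' r, ψ' r))
    (fun t => (vf_lip a ha t).lipschitzOnWith) (fun t => ⟨h.pair t, trivial⟩)
    (fun t => ⟨h'.pair t, trivial⟩) (by simp [h1, h2])
  have := congrFun this r
  simpa using this

lemma Sol.gron {a : ℝ} (ha : 0 < a) : ∃ K : ℝ, 0 ≤ K ∧ ∀ {φ ψ φ' ψ' : ℝ → ℝ},
    Sol a φ ψ → Sol a φ' ψ' → φ 0 = φ' 0 → ∀ r, 0 ≤ r →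
    |φ r - φ' r| ≤ |ψ 0 - ψ' 0| * Real.exp (K * r) ∧
    |ψ r - ψ' r| ≤ |ψ 0 - ψ' 0| * Real.exp (K * r) := by
  refine ⟨_, NNReal.coe_nonneg (2 + (1 / a).toNNReal), ?_⟩
  intro φ ψ φ' ψ' h h' h0 r hr
  have := dist_le_of_trajectories_ODE (v := vf a) (vf_lip a ha) (a := 0) (b := r)
    (f := fun r => (φ r, ψ r)) (g := fun r => (φ' r, ψ' r)) (δ := |ψ 0 - ψ' 0|)
    (fun t _ => (h.pair t).continuousAt.continuousWithinAt)
    (fun t _ => (h.pair t).hasDerivWithinAt)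
    (fun t _ => (h'.pair t).continuousAt.continuousWithinAt)
    (fun t _ => (h'.pair t).hasDerivWithinAt)
    (by rw [Prod.dist_eq]; simp [h0, Real.dist_eq]) r ⟨hr, le_rfl⟩
  rw [Prod.dist_eq, sub_zero] at this
  exact ⟨(le_max_left _ _).trans this, (le_max_right _ _).trans this⟩

/-- Existence on a bounded interval. -/
lemma exists_local (a : ℝ) (ha : 0 < a) (c b R : ℝ) (hR : 0 < R) : ∃ φ ψ : ℝ → ℝ,
    φ 0 = c ∧ ψ 0 = b ∧ ∀ t ∈ Set.Ioo (-R) R,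
      HasDerivAt (fun r => (φ r, ψ r)) (vf a t (φ t, ψ t)) t := by
  obtain ⟨ε, hε⟩ : ∃ ε, ε = a ^ 2 / (2 * R) := ⟨_, rfl⟩
  have hε0 : 0 < ε := by rw [hε]; positivity
  let f : ℝ → ℝ × ℝ → ℝ × ℝ := fun t x =>
    (ε * x.2 / (t ^ 2 + a ^ 2), (t ^ 2 + a ^ 2) * Real.sin (2 * x.1 / ε))
  let x₀ : ℝ × ℝ := (ε * c, a ^ 2 * b)
  obtain ⟨ρ, hρ⟩ : ∃ ρ, ρ = |a ^ 2 * b| + R * (R ^ 2 + a ^ 2) := ⟨_, rfl⟩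
  have hρ0 : 0 ≤ ρ := by rw [hρ]; positivity
  have hρ1 : |a ^ 2 * b| ≤ ρ := by
    rw [hρ]; have : 0 ≤ R * (R ^ 2 + a ^ 2) := by positivity
    linarith
  have hρ2 : R * (R ^ 2 + a ^ 2) ≤ ρ := by
    rw [hρ]; linarith [abs_nonneg (a ^ 2 * b)]
  have hPL : IsPicardLindelof f (tmin := -R) (tmax := R) ⟨0, by constructor <;> linarith⟩ x₀
      ρ.toNNReal 0 (ρ / R).toNNReal (ε / a ^ 2 + (R ^ 2 + a ^ 2) * (2 / ε)).toNNReal := by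
    have hb : ∀ t ∈ Set.Icc (-R) R, t ^ 2 ≤ R ^ 2 := fun t ht => by
      nlinarith [ht.1, ht.2]
    constructor
    · intro t ht
      apply LipschitzWith.lipschitzOnWith
      apply LipschitzWith.of_dist_le_mul
      intro x y
      rw [Real.coe_toNNReal _ (by positivity)]
      rw [Prod.dist_eq, Prod.dist_eq, Real.dist_eq, Real.dist_eq, Real.dist_eq, Real.dist_eq]
      set m := max |x.1 - y.1| |x.2 - y.2| with hm
      have h1 : |x.1 - y.1| ≤ m := le_max_left _ _
      have h2 : |x.2 - y.2| ≤ m := le_max_right _ _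
      have hm0 : 0 ≤ m := (abs_nonneg _).trans h1
      have hta : 0 < t ^ 2 + a ^ 2 := by positivity
      apply max_le
      · have e : (f t x).1 - (f t y).1 = ε / (t ^ 2 + a ^ 2) * (x.2 - y.2) := by
          simp only [f]; ring
        rw [e, abs_mul, abs_of_pos (by positivity)]
        have : ε / (t ^ 2 + a ^ 2) ≤ ε / a ^ 2 := by
          gcongr; nlinarith [sq_nonneg t]
        calc _ ≤ ε / a ^ 2 * m := by gcongr
          _ ≤ _ := by
            gcongr
            have : 0 ≤ (R ^ 2 + a ^ 2) * (2 / ε) := by positivity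
            linarith
      · have e : (f t x).2 - (f t y).2 =
            (t ^ 2 + a ^ 2) * (Real.sin (2 * x.1 / ε) - Real.sin (2 * y.1 / ε)) := by
          simp only [f]; ring
        rw [e, abs_mul, abs_of_pos hta]
        have h3 := abs_sin_sub_le (2 * x.1 / ε) (2 * y.1 / ε)
        have h4 : 2 * x.1 / ε - 2 * y.1 / ε = 2 / ε * (x.1 - y.1) := by ring
        rw [h4, abs_mul, abs_of_pos (by positivity : 0 < 2 / ε)] at h3
        have h5 := hb t ht
        have h6 : |Real.sin (2 * x.1 / ε) - Real.sin (2 * y.1 / ε)| ≤ 2 / ε * m :=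
          h3.trans (mul_le_mul_of_nonneg_left h1 (by positivity))
        calc _ ≤ (R ^ 2 + a ^ 2) * (2 / ε * m) := 
              mul_le_mul (by linarith) h6 (abs_nonneg _) (by positivity)
          _ ≤ _ := by
            have : 0 ≤ ε / a ^ 2 * m := by positivity
            nlinarith
    · intro x _
      apply Continuous.continuousOn
      have : ∀ t : ℝ, t ^ 2 + a ^ 2 ≠ 0 := fun t => by positivity
      apply Continuous.prodMk
      · exact Continuous.div (by fun_prop) (by fun_prop) this
      · fun_prop
    · intro t ht x hx
      rw [Real.coe_toNNReal _ (by positivity)]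
      rw [Metric.mem_closedBall, Real.coe_toNNReal _ hρ0, Prod.dist_eq] at hx
      have hx2 : |x.2 - a ^ 2 * b| ≤ ρ := (le_max_right _ _).trans hx
      have hx3 : |x.2| ≤ 2 * ρ := by
        have := abs_add_le (x.2 - a ^ 2 * b) (a ^ 2 * b)
        simp only [sub_add_cancel] at this
        linarith
      have hta : 0 < t ^ 2 + a ^ 2 := by positivity
      rw [Prod.norm_def]
      apply max_le
      · simp only [f, Real.norm_eq_abs]
        rw [abs_div, abs_mul, abs_of_pos hε0, abs_of_pos hta]
        calc _ ≤ ε * (2 * ρ) / a ^ 2 := by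
              gcongr; nlinarith [sq_nonneg t]
          _ = ρ / R := by rw [hε]; field_simp
      · simp only [f, Real.norm_eq_abs]
        rw [abs_mul, abs_of_pos hta, le_div_iff₀ hR]
        have := Real.abs_sin_le_one (2 * x.1 / ε)
        have h1 := hb t ht
        calc _ ≤ ((R ^ 2 + a ^ 2) * 1) * R := by gcongr
          _ ≤ ρ := by linarith
    · rw [Real.coe_toNNReal _ (by positivity), Real.coe_toNNReal _ hρ0]
      simp
      field_simp
      rfl
  obtain ⟨α, hα0, hα⟩ := hPL.exists_eq_forall_mem_Icc_hasDerivWithinAt₀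
  refine ⟨fun t => (α t).1 / ε, fun t => (α t).2 / (t ^ 2 + a ^ 2), ?_, ?_, ?_⟩
  · have : α 0 = x₀ := hα0
    simp only [this, x₀]; field_simp
  · have : α 0 = x₀ := hα0
    simp only [this, x₀]; field_simp; ring
  · intro t ht
    have hd := (hα t ⟨ht.1.le, ht.2.le⟩).hasDerivAt (Icc_mem_nhds ht.1 ht.2)
    have d1 : HasDerivAt (fun t => (α t).1) (f t (α t)).1 t := hd.fst
    have d2 : HasDerivAt (fun t => (α t).2) (f t (α t)).2 t := hd.snd
    have hta : t ^ 2 + a ^ 2 ≠ 0 := by positivity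
    have d3 : HasDerivAt (fun t : ℝ => t ^ 2 + a ^ 2) (2 * t) t := by
      simpa using (hasDerivAt_pow 2 t).add_const (a ^ 2)
    refine ((d1.div_const ε).prodMk (d2.div d3 hta)).congr_deriv ?_
    simp only [vf, f]
    ext
    · simp only; field_simp
    · simp only [mul_div_assoc]; field_simp

lemma exists_sol (a : ℝ) (ha : 0 < a) (c b : ℝ) : ∃ φ ψ : ℝ → ℝ, Sol a φ ψ ∧ φ 0 = c ∧ ψ 0 = b := by
  have H : ∀ R : ℝ, ∃ α : ℝ → ℝ × ℝ, α 0 = (c, b) ∧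
      (0 < R → ∀ t ∈ Set.Ioo (-R) R, HasDerivAt α (vf a t (α t)) t) := by
    intro R
    by_cases hR : 0 < R
    · obtain ⟨φ, ψ, h1, h2, h3⟩ := exists_local a ha c b R hR
      exact ⟨fun r => (φ r, ψ r), by simp [h1, h2], fun _ => h3⟩
    · exact ⟨fun _ => (c, b), rfl, fun h => absurd h hR⟩
  choose α hα0 hα using H
  have key : ∀ R R' : ℝ, 0 < R → R ≤ R' → Set.EqOn (α R) (α R') (Set.Ioo (-R) R) := by
    intro R R' hR hRR
    refine ODE_solution_unique_of_mem_Ioo (v := vf a) (s := fun _ => Set.univ) (t₀ := 0)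
      (fun t _ => (vf_lip a ha t).lipschitzOnWith) ⟨by linarith, hR⟩
      (fun t ht => ⟨hα R hR t ht, trivial⟩)
      (fun t ht => ⟨hα R' (by linarith) t ⟨by linarith [ht.1], by linarith [ht.2]⟩, trivial⟩)
      (by rw [hα0, hα0])
  let β : ℝ → ℝ × ℝ := fun t => α (|t| + 1) t
  have hβ : ∀ t, HasDerivAt β (vf a t (β t)) t := by
    intro t
    have hpos : 0 < |t| + 2 := by positivity
    have e : ∀ s ∈ Set.Ioo (-(|t| + 1)) (|t| + 1), β s = α (|t| + 2) s := by
      intro s hs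
      have hs' : |s| < |t| + 1 := abs_lt.2 hs
      exact key (|s| + 1) (|t| + 2) (by positivity) (by linarith) (abs_lt.1 (by linarith))
    have ht : t ∈ Set.Ioo (-(|t| + 1)) (|t| + 1) := abs_lt.1 (by linarith)
    have h1 := hα (|t| + 2) hpos t (abs_lt.1 (by linarith))
    rw [← e t ht] at h1
    refine h1.congr_of_eventuallyEq ?_
    filter_upwards [Ioo_mem_nhds ht.1 ht.2] with s hs using e s hs
  refine ⟨fun t => (β t).1, fun t => (β t).2, ⟨fun r => (hβ r).fst, fun r => (hβ r).snd⟩, ?_, ?_⟩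
  · simp [β, hα0]
  · simp [β, hα0]

lemma energy_deriv {a : ℝ} {φ ψ : ℝ → ℝ} (h : Sol a φ ψ) (r : ℝ) :
    HasDerivAt (fun r => ψ r ^ 2 / 2 - Real.sin (φ r) ^ 2)
      (-(2 * r / (r ^ 2 + a ^ 2)) * ψ r ^ 2) r := by
  have h1 := ((h.2 r).pow 2).div_const 2
  have h2 := ((h.1 r).sin).pow 2
  refine (h1.sub h2).congr_deriv ?_
  rw [Real.sin_two_mul]
  push_cast
  ring

lemma energy_anti {a : ℝ} {φ ψ : ℝ → ℝ} (h : Sol a φ ψ) {s t : ℝ} (hs : 0 ≤ s) (hst : s ≤ t) :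
    ψ t ^ 2 / 2 - Real.sin (φ t) ^ 2 ≤ ψ s ^ 2 / 2 - Real.sin (φ s) ^ 2 := by
  have : AntitoneOn (fun r => ψ r ^ 2 / 2 - Real.sin (φ r) ^ 2) (Set.Ici 0) := by
    apply antitoneOn_of_deriv_nonpos (convex_Ici 0)
    · exact fun r _ => (energy_deriv h r).continuousAt.continuousWithinAt
    · exact fun r _ => (energy_deriv h r).differentiableAt.differentiableWithinAt
    · intro r hr
      rw [interior_Ici] at hr
      have hr' : (0 : ℝ) < r := hr
      rw [(energy_deriv h r).deriv]
      have : 0 ≤ (2 * r / (r ^ 2 + a ^ 2)) * ψ r ^ 2 := by positivity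
      linarith
  exact this hs (Set.mem_Ici.2 (hs.trans hst)) hst

lemma stuck {a : ℝ} (ha : 0 < a) {φ ψ : ℝ → ℝ} (h : Sol a φ ψ) (s : ℝ)
    (h1 : ψ s = 0) (h2 : Real.sin (2 * φ s) = 0) (r : ℝ) : φ r = φ s ∧ ψ r = 0 := by
  have hc : Sol a (fun _ => φ s) (fun _ => 0) := by
    refine ⟨fun r => hasDerivAt_const _ _, fun r => ?_⟩
    simp only [h2, mul_zero, sub_zero]
    exact hasDerivAt_const _ _
  exact h.unique ha hc s rfl h1 r

lemma pos_of_ne {ψ : ℝ → ℝ} (hc : Continuous ψ) (h0 : 0 ≤ ψ 0) {s : ℝ}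
    (h : ∀ r ∈ Set.Icc 0 s, ψ r ≠ 0) : ∀ r ∈ Set.Icc 0 s, 0 < ψ r := by
  intro r hr
  by_contra hcon
  push Not at hcon
  obtain ⟨x, hx, hx0⟩ := intermediate_value_Icc' hr.1 (hc.continuousOn) ⟨hcon, h0⟩
  exact h x ⟨hx.1, hx.2.trans hr.2⟩ hx0

lemma Sol.contψ {a : ℝ} {φ ψ : ℝ → ℝ} (h : Sol a φ ψ) : Continuous ψ :=
  continuous_iff_continuousAt.2 fun r => (h.2 r).continuousAt

lemma Sol.contφ {a : ℝ} {φ ψ : ℝ → ℝ} (h : Sol a φ ψ) : Continuous φ :=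
  continuous_iff_continuousAt.2 fun r => (h.1 r).continuousAt

lemma Sol.mvt {a : ℝ} {φ ψ : ℝ → ℝ} (h : Sol a φ ψ) {s t : ℝ} (hst : s < t) :
    ∃ ξ ∈ Set.Ioo s t, ψ ξ = (φ t - φ s) / (t - s) :=
  exists_hasDerivAt_eq_slope φ ψ hst h.contφ.continuousOn fun x _ => h.1 x

/-- A trajectory reaching `nπ` is strictly increasing with nonnegative energy up to that time. -/
lemma pos_of_cross {a : ℝ} (ha : 0 < a) {n : ℕ} (hn : 0 < n) {φ ψ : ℝ → ℝ} (h : Sol a φ ψ)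
    (h0 : φ 0 = n * π / 2) (hb : 0 ≤ ψ 0) {s : ℝ} (hsn : φ s = n * π) :
    (∀ r ∈ Set.Icc 0 s, 0 < ψ r) ∧
      ∀ r ∈ Set.Icc 0 s, 0 ≤ ψ r ^ 2 / 2 - Real.sin (φ r) ^ 2 := by
  have hs0 : Real.sin (φ s) = 0 := by rw [hsn, Real.sin_nat_mul_pi]
  have hψs : ψ s ≠ 0 := by
    intro h1
    have := (stuck ha h s h1 (by rw [Real.sin_two_mul, hs0]; ring) 0).1
    rw [h0, hsn] at this
    have : 0 < n * π := by positivity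
    linarith
  have hE : ∀ r ∈ Set.Icc 0 s, 0 < ψ r ^ 2 / 2 - Real.sin (φ r) ^ 2 := by
    intro r hr
    have := energy_anti h hr.1 hr.2
    rw [hs0] at this
    have : 0 < ψ s ^ 2 := by positivity
    linarith
  refine ⟨pos_of_ne h.contψ hb fun r hr hr0 => ?_, fun r hr => (hE r hr).le⟩
  have := hE r hr
  rw [hr0] at this
  nlinarith [sq_nonneg (Real.sin (φ r))]

/-- Energy is lost too quickly for a late crossing between consecutive hilltops. -/
lemma late {a : ℝ} (ha : 0 < a) {n : ℕ} (hn : 0 < n) : ∃ R₀ : ℝ, 0 < R₀ ∧ ∀ φ ψ : ℝ → ℝ,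
    Sol a φ ψ → φ 0 = n * π / 2 → 0 ≤ ψ 0 → ∀ j : ℕ, j < n →
    (∀ r ∈ Set.Icc 0 R₀, φ r < j * π + π / 4) → ∀ s, 0 ≤ s → φ s ≠ n * π := by
  refine ⟨2 + a + 8 * n ^ 2, by positivity, ?_⟩
  intro φ ψ h h0 hb j hj hlt s hs hsn
  have hpi := Real.pi_pos
  have hpi2 := Real.pi_lt_d2
  have hn' : (0 : ℝ) < n := by exact_mod_cast hn
  have hjn : (j : ℝ) + 1 ≤ n := by exact_mod_cast hj
  have hjn' : (j : ℝ) * π + π ≤ n * π := by nlinarith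
  obtain ⟨hpos, hE⟩ := pos_of_cross ha hn h h0 hb hsn
  have hmono : StrictMonoOn φ (Set.Icc 0 s) := by
    apply strictMonoOn_of_deriv_pos (convex_Icc 0 s) h.contφ.continuousOn
    intro x hx
    rw [(h.1 x).deriv]
    exact hpos x (interior_subset hx)
  have h00 := hlt 0 ⟨le_rfl, by positivity⟩
  obtain ⟨T, hT, hTv⟩ := intermediate_value_Icc hs (h.contφ.continuousOn)
    (show (j : ℝ) * π + π / 4 ∈ Set.Icc (φ 0) (φ s) from ⟨h00.le, by rw [hsn]; linarith⟩)
  have hTR : 2 + a + 8 * (n : ℝ) ^ 2 < T := by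
    by_contra hcon
    push Not at hcon
    have := hlt T ⟨hT.1, hcon⟩
    linarith
  have hT0 : 0 < T := lt_trans (by positivity) hTR
  obtain ⟨T2, hT2, hT2v⟩ := intermediate_value_Icc hT.2 (h.contφ.continuousOn)
    (show (j : ℝ) * π + 3 * π / 4 ∈ Set.Icc (φ T) (φ s) from
      ⟨by rw [hTv]; linarith, by rw [hsn]; linarith⟩)
  have hTT2 : T < T2 := by
    rcases hT2.1.eq_or_lt with h1 | h1
    · rw [← h1, hTv] at hT2v; linarith
    · exact h1
  -- upper bound of the energy at T
  have hup : ψ T ^ 2 / 2 - Real.sin (φ T) ^ 2 ≤ (n * π / T) ^ 2 / 2 := by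
    obtain ⟨ξ, hξ, hξv⟩ := h.mvt hT0
    have h1 := energy_anti h hξ.1.le hξ.2.le
    have h2 : ψ ξ ≤ n * π / T := by
      rw [hξv, sub_zero]
      gcongr
      rw [hTv, h0]
      nlinarith
    have h3 := hpos ξ ⟨hξ.1.le, hξ.2.le.trans hT.2⟩
    have h4 : ψ ξ ^ 2 ≤ (n * π / T) ^ 2 := by gcongr
    linarith [sq_nonneg (Real.sin (φ ξ))]
  -- speed on [T, T2]
  have hsp : ∀ r ∈ Set.Icc T T2, 1 ≤ ψ r := by
    intro r hr
    have hrs : r ∈ Set.Icc 0 s := ⟨hT0.le.trans hr.1, hr.2.trans hT2.2⟩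
    have l1 : φ T ≤ φ r := hmono.monotoneOn hT hrs hr.1
    have l2 : φ r ≤ φ T2 := hmono.monotoneOn hrs ⟨hT0.le.trans hTT2.le, hT2.2⟩ hr.2
    rw [hTv] at l1
    rw [hT2v] at l2
    have hcos : Real.cos (2 * φ r) ≤ 0 := by
      have e : Real.cos (2 * φ r) = Real.cos (2 * φ r - j * (2 * π)) := by
        rw [Real.cos_sub_nat_mul_two_pi]
      rw [e]
      apply Real.cos_nonpos_of_pi_div_two_le_of_le <;> linarith
    have hsin : 1 / 2 ≤ Real.sin (φ r) ^ 2 := by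
      rw [Real.cos_two_mul] at hcos
      nlinarith [Real.sin_sq_add_cos_sq (φ r)]
    have := hE r hrs
    nlinarith [hpos r hrs]
  have hdt : T2 ≤ T + 2 := by
    obtain ⟨ξ, hξ, hξv⟩ := h.mvt hTT2
    have h1 := hsp ξ ⟨hξ.1.le, hξ.2.le⟩
    rw [hξv, le_div_iff₀ (by linarith), hTv, hT2v] at h1
    linarith
  -- energy loss
  have hloss : (2 / (5 * T)) * (π / 2) ≤ ψ T ^ 2 / 2 - Real.sin (φ T) ^ 2 := by
    have hG : ∀ r, HasDerivAt (fun r => ψ r ^ 2 / 2 - Real.sin (φ r) ^ 2 + 2 / (5 * T) * φ r)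
        (-(2 * r / (r ^ 2 + a ^ 2)) * ψ r ^ 2 + 2 / (5 * T) * ψ r) r := fun r =>
      (energy_deriv h r).add ((h.1 r).const_mul _)
    have hanti : AntitoneOn (fun r => ψ r ^ 2 / 2 - Real.sin (φ r) ^ 2 + 2 / (5 * T) * φ r)
        (Set.Icc T T2) := by
      apply antitoneOn_of_deriv_nonpos (convex_Icc T T2)
      · exact fun r _ => (hG r).continuousAt.continuousWithinAt
      · exact fun r _ => (hG r).differentiableAt.differentiableWithinAt
      · intro r hr
        have hr := interior_subset hr
        rw [(hG r).deriv]
        have h1 := hsp r hr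
        have hr0 : 0 < r := hT0.trans_le hr.1
        have haT : a ≤ T := by nlinarith [sq_nonneg (n : ℝ)]
        have h2T : 2 ≤ T := by nlinarith [sq_nonneg (n : ℝ)]
        have h2 : 2 / (5 * T) ≤ 2 * r / (r ^ 2 + a ^ 2) := by
          rw [div_le_div_iff₀ (by positivity) (by positivity)]
          have hr2 : r ≤ 2 * T := by linarith [hr.2]
          have h3 : a ^ 2 ≤ T * r := by nlinarith [hr.1]
          nlinarith
        have h3 : 0 ≤ 2 / (5 * T) := by positivity
        have h4 : 2 / (5 * T) * ψ r ≤ 2 * r / (r ^ 2 + a ^ 2) * ψ r ^ 2 := by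
          have : ψ r ≤ ψ r ^ 2 := by nlinarith
          gcongr
        linarith
    have h5 := hanti ⟨le_rfl, hTT2.le⟩ ⟨hTT2.le, le_rfl⟩ hTT2.le
    simp only [hTv, hT2v] at h5
    have h6 := hE T2 ⟨hT0.le.trans hTT2.le, hT2.2⟩
    rw [hT2v] at h6
    rw [hTv]
    have e : 2 / (5 * T) * (π / 2) =
      2 / (5 * T) * (j * π + 3 * π / 4) - 2 / (5 * T) * (j * π + π / 4) := by ring
    rw [e]
    linarith
  have hfin := hloss.trans hup
  have e1 : (2 / (5 * T)) * (π / 2) = (π / T ^ 2) * (T / 5) := by field_simp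
  have e2 : (n * π / T) ^ 2 / 2 = (π / T ^ 2) * (n ^ 2 * π / 2) := by field_simp
  rw [e1, e2] at hfin
  have := le_of_mul_le_mul_left hfin (by positivity)
  nlinarith [sq_nonneg (n : ℝ)]

lemma large {a : ℝ} (ha : 0 < a) {n : ℕ} (hn : 0 < n) : ∃ b : ℝ, 0 < b ∧ ∀ φ ψ : ℝ → ℝ,
    Sol a φ ψ → φ 0 = n * π / 2 → ψ 0 = b → n * π < φ 1 := by
  have hnpi : 0 < n * π := by positivity
  refine ⟨(1 + a ^ 2) * (n * π + 1) / a ^ 2, by positivity, ?_⟩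
  intro φ ψ h h0 hb
  have d3 : ∀ r, HasDerivAt (fun t : ℝ => t ^ 2 + a ^ 2) (2 * r) r := fun r => by
    simpa using (hasDerivAt_pow 2 r).add_const (a ^ 2)
  have hG : ∀ r, HasDerivAt (fun r => (r ^ 2 + a ^ 2) * ψ r + (1 + a ^ 2) * r)
      ((r ^ 2 + a ^ 2) * Real.sin (2 * φ r) + (1 + a ^ 2)) r := by
    intro r
    have h1 := ((d3 r).mul (h.2 r)).add ((hasDerivAt_id r).const_mul (1 + a ^ 2))
    refine h1.congr_deriv ?_
    have : r ^ 2 + a ^ 2 ≠ 0 := by positivity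
    field_simp
    ring
  have hmono : MonotoneOn (fun r => (r ^ 2 + a ^ 2) * ψ r + (1 + a ^ 2) * r) (Set.Icc 0 1) := by
    apply monotoneOn_of_deriv_nonneg (convex_Icc 0 1)
    · exact fun r _ => (hG r).continuousAt.continuousWithinAt
    · exact fun r _ => (hG r).differentiableAt.differentiableWithinAt
    · intro r hr
      have hr := interior_subset hr
      rw [(hG r).deriv]
      have h1 : r ^ 2 ≤ 1 := by nlinarith [hr.1, hr.2]
      have h2 := Real.neg_one_le_sin (2 * φ r)
      have h3 : 0 < r ^ 2 + a ^ 2 := by positivity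
      nlinarith
  obtain ⟨ξ, hξ, hξv⟩ := h.mvt (zero_lt_one)
  have h1 := hmono ⟨le_rfl, zero_le_one⟩ ⟨hξ.1.le, hξ.2.le⟩ hξ.1.le
  simp only [hb] at h1
  have e : (0 ^ 2 + a ^ 2) * ((1 + a ^ 2) * (n * π + 1) / a ^ 2) + (1 + a ^ 2) * 0
      = (1 + a ^ 2) * (n * π + 1) := by field_simp; ring
  rw [e] at h1
  have h2 : n * π ≤ ψ ξ := by
    by_contra hcon
    push Not at hcon
    have h3 : ξ ^ 2 ≤ 1 := by nlinarith [hξ.1, hξ.2]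
    have h4 : (ξ ^ 2 + a ^ 2) * ψ ξ < (ξ ^ 2 + a ^ 2) * (n * π) := by
      have := hξ.1
      gcongr
    have h5 : (ξ ^ 2 + a ^ 2) * (n * π) ≤ (1 + a ^ 2) * (n * π) := by gcongr
    have h6 : (1 + a ^ 2) * ξ ≤ (1 + a ^ 2) * 1 := by
      have := hξ.2.le
      gcongr
    nlinarith
  rw [hξv, h0] at h2
  linarith

/-- The shooting argument. -/
lemma shooting {a : ℝ} (ha : 0 < a) {n : ℕ} (hn : 0 < n) : ∃ φ ψ : ℝ → ℝ,
    Sol a φ ψ ∧ φ 0 = n * π / 2 ∧ Tendsto φ atTop (nhds (n * π)) := by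
  have hpi := Real.pi_pos
  have hnpi : 0 < n * π := by positivity
  choose Φ Ψ hS h0 hb using fun b => exists_sol a ha (n * π / 2) b
  obtain ⟨K, hK, hgron⟩ := Sol.gron ha
  let A : Set ℝ := {b | 0 ≤ b ∧ ∃ r, 0 ≤ r ∧ n * π < Φ b r}
  have hAne : A.Nonempty := by
    obtain ⟨b, hb0, hbl⟩ := large ha hn
    exact ⟨b, hb0.le, 1, zero_le_one, hbl _ _ (hS b) (h0 b) (hb b)⟩
  have hAbdd : BddBelow A := ⟨0, fun b hb => hb.1⟩
  obtain ⟨β, hβ⟩ : ∃ β, β = sInf A := ⟨_, rfl⟩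
  have hβ0 : 0 ≤ β := by rw [hβ]; exact le_csInf hAne fun b hb => hb.1
  have hdist : ∀ b R r δ, r ∈ Set.Icc 0 R → |b - β| < δ / Real.exp (K * R) →
      |Φ b r - Φ β r| < δ ∧ |Ψ b r - Ψ β r| < δ := by
    intro b R r δ hr hbδ
    have h1 := hgron (hS b) (hS β) (by rw [h0, h0]) r hr.1
    rw [hb, hb] at h1
    rw [lt_div_iff₀ (Real.exp_pos _)] at hbδ
    have h2 : |b - β| * Real.exp (K * r) ≤ |b - β| * Real.exp (K * R) := by
      have := hr.2
      gcongr
    exact ⟨by linarith, by linarith⟩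
  have happrox : ∀ R δ, 0 < δ → ∃ b ∈ A, ∀ r ∈ Set.Icc 0 R,
      |Φ b r - Φ β r| < δ ∧ |Ψ b r - Ψ β r| < δ := by
    intro R δ hδ
    have hη : 0 < δ / Real.exp (K * R) := by positivity
    obtain ⟨b, hbA, hbl⟩ := exists_lt_of_csInf_lt hAne
      (show sInf A < β + δ / Real.exp (K * R) by rw [← hβ]; linarith)
    have hge : β ≤ b := by rw [hβ]; exact csInf_le hAbdd hbA
    refine ⟨b, hbA, fun r hr => hdist b R r δ hr ?_⟩
    rw [abs_of_nonneg (by linarith)]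
    linarith
  have hcross : ∀ b ∈ A, ∀ r₀, 0 ≤ r₀ → (∀ r ∈ Set.Icc 0 r₀, Φ b r < n * π) →
      ∃ s, r₀ ≤ s ∧ Φ b s = n * π := by
    intro b hbA r₀ hr₀ hlt
    obtain ⟨-, r1, hr1, hr1v⟩ := hbA
    have : r₀ < r1 := by
      by_contra hcon
      push Not at hcon
      linarith [hlt r1 ⟨hr1, hcon⟩]
    obtain ⟨s, hs, hsv⟩ := intermediate_value_Icc this.le ((hS b).contφ.continuousOn)
      ⟨(hlt r₀ ⟨hr₀, le_rfl⟩).le, hr1v.le⟩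
    exact ⟨s, hs.1, hsv⟩
  have hsin0 : Real.sin (2 * (n * π / 2)) = 0 := by
    rw [show 2 * (n * π / 2) = n * π by ring, Real.sin_nat_mul_pi]
  have hconst : β = 0 → ∀ r, Φ β r = n * π / 2 ∧ Ψ β r = 0 := by
    intro h r
    have := stuck ha (hS β) 0 (by rw [hb, h]) (by rw [h0, hsin0]) r
    rwa [h0] at this
  have hle : ∀ r, 0 ≤ r → Φ β r ≤ n * π := by
    intro r hr
    by_contra hcon
    push Not at hcon
    have hβne : β ≠ 0 := by
      intro h
      rw [(hconst h r).1] at hcon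
      linarith
    have hβpos : 0 < β := lt_of_le_of_ne hβ0 (Ne.symm hβne)
    obtain ⟨η, hη⟩ : ∃ η, η = min β ((Φ β r - n * π) / Real.exp (K * r)) := ⟨_, rfl⟩
    have hη0 : 0 < η := by
      rw [hη]
      have : 0 < Φ β r - n * π := by linarith
      exact lt_min hβpos (by positivity)
    have hη1 : η ≤ β := by rw [hη]; exact min_le_left _ _
    have hη2 : η ≤ (Φ β r - n * π) / Real.exp (K * r) := by rw [hη]; exact min_le_right _ _
    have h1 := (hdist (β - η / 2) r r (Φ β r - n * π) ⟨hr, le_rfl⟩ (by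
      rw [show β - η / 2 - β = -(η / 2) by ring, abs_neg, abs_of_pos (by linarith)]
      linarith)).1
    have h2 := (abs_lt.1 h1).1
    have hmem : β - η / 2 ∈ A := ⟨by linarith, r, hr, by linarith⟩
    have := csInf_le hAbdd hmem
    rw [← hβ] at this
    linarith
  have hlt : ∀ r, 0 ≤ r → Φ β r < n * π := by
    intro r hr
    refine lt_of_le_of_ne (hle r hr) fun heq => ?_
    have hr0 : 0 < r := by
      rcases hr.eq_or_lt with h | h
      · rw [← h, h0] at heq; linarith
      · exact h
    have hmax : IsLocalMax (Φ β) r := by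
      filter_upwards [Ioi_mem_nhds hr0] with x hx
      rw [heq]
      exact hle x (le_of_lt hx)
    have hd : Ψ β r = 0 := by
      rw [← ((hS β).1 r).deriv]
      exact hmax.deriv_eq_zero
    have := (stuck ha (hS β) r hd (by
      rw [Real.sin_two_mul, heq, Real.sin_nat_mul_pi]; ring) 0).1
    rw [h0, heq] at this
    linarith
  have hE : ∀ r, 0 ≤ r → 0 ≤ Ψ β r ^ 2 / 2 - Real.sin (Φ β r) ^ 2 := by
    intro r hr
    by_contra hcon
    push Not at hcon
    obtain ⟨x, hx, hxm⟩ := isCompact_Icc.exists_isMaxOn (Set.nonempty_Icc.2 hr)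
      ((hS β).contφ.continuousOn (s := Set.Icc 0 r))
    have hδ1 : 0 < n * π - Φ β x := by linarith [hlt x hx.1]
    have hcont : Continuous fun p : ℝ × ℝ => p.2 ^ 2 / 2 - Real.sin p.1 ^ 2 := by fun_prop
    have hev := (hcont.continuousAt (x := (Φ β r, Ψ β r))).eventually
      (Iio_mem_nhds hcon)
    obtain ⟨δ2, hδ2, hball⟩ := Metric.eventually_nhds_iff.1 hev
    obtain ⟨b, hbA, hbc⟩ := happrox r (min (n * π - Φ β x) δ2) (lt_min hδ1 hδ2)
    have hb1 : ∀ t ∈ Set.Icc 0 r, Φ b t < n * π := by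
      intro t ht
      have h1 := ((abs_lt.1 (hbc t ht).1).2).trans_le (min_le_left _ _)
      have h2 : Φ β t ≤ Φ β x := hxm ht
      linarith
    have hb2 : Ψ b r ^ 2 / 2 - Real.sin (Φ b r) ^ 2 < 0 := by
      have h1 := hbc r ⟨hr, le_rfl⟩
      refine @hball (Φ b r, Ψ b r) ?_
      rw [Prod.dist_eq]
      exact max_lt (h1.1.trans_le (min_le_right _ _)) (h1.2.trans_le (min_le_right _ _))
    obtain ⟨s, hs, hsv⟩ := hcross b hbA r hr hb1
    have h3 := energy_anti (hS b) hr hs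
    rw [hsv, Real.sin_nat_mul_pi] at h3
    linarith [sq_nonneg (Ψ b s)]
  have hψ : ∀ r, 0 ≤ r → 0 ≤ Ψ β r := by
    intro r hr
    by_cases hβz : β = 0
    · rw [(hconst hβz r).2]
    · refine (pos_of_ne (hS β).contψ (by rw [hb]; exact hβ0) (s := r) ?_ r ⟨hr, le_rfl⟩).le
      intro t ht ht0
      have h1 := hE t ht.1
      rw [ht0] at h1
      have h2 : Real.sin (Φ β t) = 0 := by
        have : Real.sin (Φ β t) ^ 2 = 0 := by nlinarith [sq_nonneg (Real.sin (Φ β t))]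
        exact pow_eq_zero_iff (two_ne_zero) |>.1 this
      have h3 := (stuck ha (hS β) t ht0 (by rw [Real.sin_two_mul, h2]; ring) 0).2
      rw [hb] at h3
      exact hβz h3
  have hmono : MonotoneOn (Φ β) (Set.Ici 0) := by
    apply monotoneOn_of_deriv_nonneg (convex_Ici 0) (hS β).contφ.continuousOn
    · exact fun r _ => ((hS β).1 r).differentiableAt.differentiableWithinAt
    · intro r hr
      rw [((hS β).1 r).deriv]
      exact hψ r (interior_subset hr)
  obtain ⟨L, hL⟩ : ∃ L, Tendsto (Φ β) atTop (nhds L) := by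
    have hm : Monotone fun r => Φ β (max r 0) := fun x y hxy =>
      hmono (Set.mem_Ici.2 (le_max_right _ _)) (Set.mem_Ici.2 (le_max_right _ _)) (max_le_max hxy le_rfl)
    have hbd : BddAbove (Set.range fun r => Φ β (max r 0)) := by
      refine ⟨n * π, ?_⟩
      rintro _ ⟨r, rfl⟩
      exact hle _ (le_max_right _ _)
    refine ⟨_, (tendsto_atTop_ciSup hm hbd).congr' ?_⟩
    filter_upwards [eventually_ge_atTop (0 : ℝ)] with r hr
    rw [max_eq_left hr]
  have hLge : ∀ r, 0 ≤ r → Φ β r ≤ L := by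
    intro r hr
    refine ge_of_tendsto hL ?_
    filter_upwards [eventually_ge_atTop r] with t ht
    exact hmono hr (hr.trans ht) ht
  have hLle : L ≤ n * π := by
    refine le_of_tendsto hL ?_
    filter_upwards [eventually_ge_atTop (0 : ℝ)] with t ht using hle t ht
  have hsinL : Real.sin L = 0 := by
    have hξ : ∀ N : ℕ, ∃ ξ ∈ Set.Ioo (N : ℝ) (N + 1), Ψ β ξ = Φ β (N + 1) - Φ β N := by
      intro N
      obtain ⟨ξ, h1, h2⟩ := (hS β).mvt (show (N : ℝ) < N + 1 by linarith)
      exact ⟨ξ, h1, by rw [h2]; simp⟩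
    choose ξ hξ1 hξ2 using hξ
    have hN : Tendsto (fun N : ℕ => (N : ℝ)) atTop atTop := tendsto_natCast_atTop_atTop
    have hN1 : Tendsto (fun N : ℕ => (N : ℝ) + 1) atTop atTop :=
      tendsto_atTop_add_const_right _ _ hN
    have hξt : Tendsto ξ atTop atTop :=
      tendsto_atTop_mono (fun N => (hξ1 N).1.le) hN
    have t1 : Tendsto (fun N => Φ β (ξ N)) atTop (nhds L) := hL.comp hξt
    have t2 : Tendsto (fun N => Ψ β (ξ N)) atTop (nhds 0) := by
      have := (hL.comp hN1).sub (hL.comp hN)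
      rw [sub_self] at this
      refine this.congr fun N => ?_
      rw [hξ2]; rfl
    have t3 : Tendsto (fun N => Ψ β (ξ N) ^ 2 / 2 - Real.sin (Φ β (ξ N)) ^ 2) atTop
        (nhds (0 ^ 2 / 2 - Real.sin L ^ 2)) :=
      ((t2.pow 2).div_const 2).sub (((Real.continuous_sin.tendsto L).comp t1).pow 2)
    have h1 := ge_of_tendsto' t3 (b := 0) fun N =>
      hE (ξ N) ((Nat.cast_nonneg N).trans (hξ1 N).1.le)
    have : Real.sin L ^ 2 = 0 := by nlinarith [sq_nonneg (Real.sin L)]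
    exact pow_eq_zero_iff (two_ne_zero) |>.1 this
  obtain ⟨j, hj⟩ := Real.sin_eq_zero_iff.1 hsinL
  have hL0 : 0 < L := by
    have := hLge 0 le_rfl
    rw [h0] at this
    linarith
  have hj0 : 0 < j := by
    rw [← hj] at hL0
    have := pos_of_mul_pos_left hL0 hpi.le
    exact_mod_cast this
  obtain ⟨m, rfl⟩ := Int.eq_ofNat_of_zero_le hj0.le
  have hjL : (m : ℝ) * π = L := by exact_mod_cast hj
  have hmn : m ≤ n := by
    rw [← hjL] at hLle
    exact_mod_cast le_of_mul_le_mul_right hLle hpi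
  rcases hmn.eq_or_lt with hmn | hmn
  · refine ⟨Φ β, Ψ β, hS β, h0 β, ?_⟩
    rw [← hmn, hjL]
    exact hL
  · exfalso
    obtain ⟨R₀, hR₀, hlate⟩ := late ha hn
    obtain ⟨b, hbA, hbc⟩ := happrox R₀ (π / 4) (by positivity)
    have h1 : ∀ r ∈ Set.Icc 0 R₀, Φ b r < m * π + π / 4 := by
      intro r hr
      have h1 := (abs_lt.1 (hbc r hr).1).2
      have h2 := hLge r hr.1
      rw [← hjL] at h2
      linarith
    obtain ⟨s, hs, hsv⟩ := hcross b hbA 0 le_rfl (by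
      intro r hr
      have : r = 0 := le_antisymm hr.2 hr.1
      rw [this, h0]; linarith)
    exact hlate _ _ (hS b) (h0 b) (by rw [hb]; exact hbA.1) m hmn h1 s hs hsv

/-- For every `a > 0` and every positive integer `n`, there exists a `C²` solution of the
wormhole kink ODE `φ'' + (2r/(r²+a²))·φ' = sin(2φ)` with `φ → 0` at `-∞` and `φ → nπ` at `+∞`. -/
theorem nkink_exists (a : ℝ) (ha : 0 < a) (n : ℕ) (hn : 0 < n) :
    ∃ φ : ℝ → ℝ, ContDiff ℝ 2 φ ∧
      (∀ r : ℝ, deriv (deriv φ) r + (2 * r / (r ^ 2 + a ^ 2)) * deriv φ r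
          = Real.sin (2 * φ r)) ∧
      Tendsto φ atBot (nhds 0) ∧
      Tendsto φ atTop (nhds (n * Real.pi)) := by
  obtain ⟨φ, ψ, h, h0, hlim⟩ := shooting ha hn
  have d1 : deriv φ = ψ := funext fun r => (h.1 r).deriv
  have d2 : deriv ψ = fun r => Real.sin (2 * φ r) - 2 * r / (r ^ 2 + a ^ 2) * ψ r :=
    funext fun r => (h.2 r).deriv
  refine ⟨φ, ?_, ?_, ?_, hlim⟩
  · rw [show (2 : WithTop ℕ∞) = 1 + 1 by norm_num, contDiff_succ_iff_deriv]
    refine ⟨fun r => (h.1 r).differentiableAt, by simp, ?_⟩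
    rw [d1, contDiff_one_iff_deriv]
    refine ⟨fun r => (h.2 r).differentiableAt, ?_⟩
    rw [d2]
    have c1 := h.contφ
    have c2 := h.contψ
    have c3 : Continuous fun r : ℝ => 2 * r / (r ^ 2 + a ^ 2) :=
      Continuous.div (by fun_prop) (by fun_prop) fun r => by positivity
    fun_prop
  · intro r
    rw [d1, d2]
    ring
  · have h' : Sol a (fun r => n * π - φ (-r)) (fun r => ψ (-r)) := by
      constructor
      · intro r
        have := ((h.1 (-r)).scomp r (hasDerivAt_neg r)).const_sub (n * π)
        refine this.congr_deriv ?_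
        simp
      · intro r
        have := (h.2 (-r)).scomp r (hasDerivAt_neg r)
        refine this.congr_deriv ?_
        have e : Real.sin (2 * (n * π - φ (-r))) = - Real.sin (2 * φ (-r)) := by
          rw [show 2 * (n * π - φ (-r)) = n * (2 * π) - 2 * φ (-r) by ring,
            Real.sin_nat_mul_two_pi_sub]
        rw [e]
        simp
        ring
    have hu := h.unique ha h' 0 (by simp only [neg_zero, h0]; ring) (by simp)
    have e : φ = fun r => n * π - φ (-r) := funext fun r => (hu r).1
    rw [e]
    have := (hlim.comp tendsto_neg_atBot_atTop).const_sub (n * π)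
    rw [sub_self] at this
    exact this
end

section
/- For every real a > 0 and every positive integer n, the n-kink is unique: if φ and ψ are both C² solutions of φ''(r) + (2r/(r²+a²))·φ'(r) = sin(2·φ(r)) on ℝ with limits 0 at −∞ and n·π at +∞, then φ = ψ. -/
open Real Filter

/-- A kink together with its derivative. -/
structure KinkPair (a : ℝ) (n : ℕ) (f p : ℝ → ℝ) : Prop where
  df : ∀ r, HasDerivAt f (p r) r
  dp : ∀ r, HasDerivAt p (Real.sin (2 * f r) - (2 * r / (r ^ 2 + a ^ 2)) * p r) r
  bot : Tendsto f atBot (nhds 0)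
  top : Tendsto f atTop (nhds (n * Real.pi))

/-- The energy. -/
noncomputable def kinkE (f p : ℝ → ℝ) (r : ℝ) : ℝ := p r ^ 2 / 2 - Real.sin (f r) ^ 2

/-- The weighted energy. -/
noncomputable def kinkQ (a : ℝ) (f p : ℝ → ℝ) (r : ℝ) : ℝ :=
  (r ^ 2 + a ^ 2) ^ 2 * (p r ^ 2 / 2 - Real.sin (f r) ^ 2)

lemma friction_bound (a : ℝ) (ha : 0 < a) (r : ℝ) : |2 * r / (r ^ 2 + a ^ 2)| ≤ 1 / a := by
  have h : 0 < r ^ 2 + a ^ 2 := by positivity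
  rw [abs_div, abs_of_pos h, div_le_div_iff₀ h ha]
  rw [abs_mul, abs_two]
  nlinarith [sq_nonneg (|r| - a), sq_abs r]

lemma ode_unique (a : ℝ) (ha : 0 < a) (f p f' p' : ℝ → ℝ)
    (h1 : ∀ r, HasDerivAt f (p r) r)
    (h2 : ∀ r, HasDerivAt p (Real.sin (2 * f r) - (2 * r / (r ^ 2 + a ^ 2)) * p r) r)
    (h3 : ∀ r, HasDerivAt f' (p' r) r)
    (h4 : ∀ r, HasDerivAt p' (Real.sin (2 * f' r) - (2 * r / (r ^ 2 + a ^ 2)) * p' r) r)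
    (t : ℝ) (e1 : f t = f' t) (e2 : p t = p' t) : f = f' := by
  have key : (fun r => (f r, p r)) = (fun r => (f' r, p' r)) := by
    refine ODE_solution_unique_univ (t₀ := t) (s := fun _ => Set.univ)
      (K := ⟨2 + 1 / a, by positivity⟩)
      (v := fun r x => (x.2, Real.sin (2 * x.1) - (2 * r / (r ^ 2 + a ^ 2)) * x.2)) ?_ ?_ ?_ ?_
    · intro r
      refine LipschitzOnWith.of_dist_le_mul ?_
      rintro ⟨x, y⟩ _ ⟨x', y'⟩ _
      simp only [Prod.dist_eq, Real.dist_eq]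
      change _ ≤ (2 + 1 / a) * _
      have ha' : 0 < 1 / a := by positivity
      set M := max |x - x'| |y - y'| with hM
      have m1 : |x - x'| ≤ M := le_max_left _ _
      have m2 : |y - y'| ≤ M := le_max_right _ _
      have M0 : 0 ≤ M := le_trans (abs_nonneg _) m1
      refine max_le ?_ ?_
      · nlinarith
      · have hs : |Real.sin (2 * x) - Real.sin (2 * x')| ≤ 2 * |x - x'| := by
          have := Real.abs_sin_sub_sin_le (2 * x) (2 * x')
          rwa [← mul_sub, abs_mul, abs_two] at this
        have hg := friction_bound a ha r
        set g := 2 * r / (r ^ 2 + a ^ 2)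
        have h5 : |g * (y - y')| ≤ 1 / a * M := by
          rw [abs_mul]
          exact mul_le_mul hg m2 (abs_nonneg _) ha'.le
        have h6 : Real.sin (2 * x) - g * y - (Real.sin (2 * x') - g * y')
          = (Real.sin (2 * x) - Real.sin (2 * x')) - g * (y - y') := by ring
        rw [h6]
        have := abs_sub (Real.sin (2 * x) - Real.sin (2 * x')) (g * (y - y'))
        nlinarith
    · exact fun r => ⟨(h1 r).prodMk (h2 r), Set.mem_univ _⟩
    · exact fun r => ⟨(h3 r).prodMk (h4 r), Set.mem_univ _⟩
    · simp [e1, e2]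
  funext r
  exact congrArg Prod.fst (congrFun key r)

namespace KinkPair

variable {a : ℝ} {n : ℕ} {f p : ℝ → ℝ}

lemma reflect (h : KinkPair a n f p) :
    KinkPair a n (fun r => n * Real.pi - f (-r)) (fun r => p (-r)) where
  df r := by
    have := ((h.df (-r)).comp r (hasDerivAt_neg r)).const_sub (n * Real.pi)
    simpa using this
  dp r := by
    have := (h.dp (-r)).comp r (hasDerivAt_neg r)
    refine this.congr_deriv ?_
    have : Real.sin (2 * (n * Real.pi - f (-r))) = - Real.sin (2 * f (-r)) := by
      have e : 2 * (n * Real.pi - f (-r)) = n * (2 * Real.pi) - 2 * f (-r) := by ring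
      rw [e, Real.sin_nat_mul_two_pi_sub]
    rw [this]
    ring
  bot := by
    have := (h.top.comp tendsto_neg_atBot_atTop).const_sub (n * Real.pi)
    simpa using this
  top := by
    have := (h.bot.comp tendsto_neg_atTop_atBot).const_sub (n * Real.pi)
    simpa using this

lemma dE (h : KinkPair a n f p) (r : ℝ) :
    HasDerivAt (kinkE f p) (-(2 * r / (r ^ 2 + a ^ 2)) * p r ^ 2) r := by
  have h1 := (((h.dp r).pow 2).div_const 2).sub ((h.df r).sin.pow 2)
  refine h1.congr_deriv ?_
  rw [Real.sin_two_mul]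
  push_cast
  ring

lemma dQ (ha : 0 < a) (h : KinkPair a n f p) (r : ℝ) :
    HasDerivAt (kinkQ a f p) (-(4 * r * (r ^ 2 + a ^ 2) * Real.sin (f r) ^ 2)) r := by
  have h1 := ((((hasDerivAt_id r).pow 2).add_const (a ^ 2)).pow 2).mul (h.dE r)
  refine h1.congr_deriv ?_
  have : r ^ 2 + a ^ 2 ≠ 0 := by positivity
  simp only [kinkE, id, Pi.pow_apply]
  push_cast
  field_simp
  ring

lemma E_anti (ha : 0 < a) (h : KinkPair a n f p) : AntitoneOn (kinkE f p) (Set.Ici 0) := by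
  refine antitoneOn_of_deriv_nonpos (convex_Ici 0)
    (fun x _ => (h.dE x).continuousAt.continuousWithinAt)
    (fun x _ => (h.dE x).differentiableAt.differentiableWithinAt) ?_
  intro x hx
  rw [interior_Ici, Set.mem_Ioi] at hx
  rw [(h.dE x).deriv]
  have : 0 ≤ 2 * x / (x ^ 2 + a ^ 2) * p x ^ 2 := by positivity
  linarith

lemma Q_anti (ha : 0 < a) (h : KinkPair a n f p) : AntitoneOn (kinkQ a f p) (Set.Ici 0) := by
  refine antitoneOn_of_deriv_nonpos (convex_Ici 0)
    (fun x _ => (h.dQ ha x).continuousAt.continuousWithinAt)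
    (fun x _ => (h.dQ ha x).differentiableAt.differentiableWithinAt) ?_
  intro x hx
  rw [interior_Ici, Set.mem_Ioi] at hx
  rw [(h.dQ ha x).deriv]
  have : 0 ≤ 4 * x * (x ^ 2 + a ^ 2) * Real.sin (f x) ^ 2 := by positivity
  linarith

lemma E_nonneg (ha : 0 < a) (h : KinkPair a n f p) {r : ℝ} (hr : 0 ≤ r) : 0 ≤ kinkE f p r := by
  by_contra hc
  push Not at hc
  have hs : Tendsto (fun x => Real.sin (f x) ^ 2) atTop (nhds 0) := by
    have := ((Real.continuous_sin.tendsto _).comp h.top).pow 2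
    simpa [Real.sin_nat_mul_pi] using this
  have h1 : ∀ᶠ x in atTop, Real.sin (f x) ^ 2 < - kinkE f p r :=
    hs.eventually_lt_const (by linarith)
  obtain ⟨x, hx, hx2⟩ := (h1.and (eventually_ge_atTop r)).exists
  have := h.E_anti ha (Set.mem_Ici.2 hr) (Set.mem_Ici.2 (hr.trans hx2)) hx2
  simp only [kinkE] at this hx
  nlinarith [sq_nonneg (p x)]

lemma E_pos (ha : 0 < a) (hn : 0 < n) (h : KinkPair a n f p) {r : ℝ} (hr : 0 ≤ r) :
    0 < kinkE f p r := by
  refine lt_of_le_of_ne (h.E_nonneg ha hr) fun hc => ?_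
  have hz : ∀ x, r ≤ x → kinkE f p x = 0 := fun x hx =>
    le_antisymm (hc ▸ h.E_anti ha (Set.mem_Ici.2 hr) (Set.mem_Ici.2 (hr.trans hx)) hx)
      (h.E_nonneg ha (hr.trans hx))
  have hev : kinkE f p =ᶠ[nhds (r + 1)] fun _ => 0 := by
    filter_upwards [lt_mem_nhds (show r < r + 1 by linarith)] with x hx using hz x hx.le
  have hd := (h.dE (r + 1)).unique ((hasDerivAt_const (r + 1) (0 : ℝ)).congr_of_eventuallyEq hev)
  have hg : 0 < 2 * (r + 1) / ((r + 1) ^ 2 + a ^ 2) := by positivity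
  have hp : p (r + 1) = 0 := by
    have : p (r + 1) ^ 2 = 0 := by
      rcases mul_eq_zero.1 hd with h1 | h1
      · linarith
      · exact h1
    exact pow_eq_zero_iff (two_ne_zero) |>.1 this
  have hs : Real.sin (f (r + 1)) = 0 := by
    have := hz (r + 1) (by linarith)
    simp only [kinkE, hp] at this
    have : Real.sin (f (r + 1)) ^ 2 = 0 := by linarith
    exact pow_eq_zero_iff (two_ne_zero) |>.1 this
  have hf : f = fun _ => f (r + 1) := by
    refine ode_unique a ha f p _ (fun _ => 0) h.df h.dp (fun x => hasDerivAt_const _ _) ?_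
      (r + 1) rfl hp
    intro x
    refine (hasDerivAt_const x (0 : ℝ)).congr_deriv ?_
    rw [Real.sin_two_mul, hs]
    ring
  have hb := h.bot
  have ht := h.top
  rw [hf] at hb ht
  have e1 := tendsto_nhds_unique hb tendsto_const_nhds
  have e2 := tendsto_nhds_unique ht tendsto_const_nhds
  have : (0 : ℝ) < n * Real.pi := by positivity
  linarith

lemma E_pos' (ha : 0 < a) (hn : 0 < n) (h : KinkPair a n f p) (r : ℝ) :
    0 < kinkE f p r := by
  rcases le_total 0 r with hr | hr
  · exact h.E_pos ha hn hr
  · have := h.reflect.E_pos ha hn (neg_nonneg.2 hr)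
    have e : ((-1 : ℝ) ^ n) ^ 2 = 1 := by rw [← pow_mul, mul_comm, pow_mul]; norm_num
    simpa [kinkE, Real.sin_nat_mul_pi_sub, mul_pow, e] using this

lemma Q_pos (ha : 0 < a) (hn : 0 < n) (h : KinkPair a n f p) (r : ℝ) :
    0 < kinkQ a f p r := by
  have := h.E_pos' ha hn r
  have h2 : 0 < (r ^ 2 + a ^ 2) ^ 2 := by positivity
  exact mul_pos h2 this

lemma p_pos (ha : 0 < a) (hn : 0 < n) (h : KinkPair a n f p) (r : ℝ) : 0 < p r := by
  have hne : ∀ x, p x ≠ 0 := by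
    intro x hx
    have := h.E_pos' ha hn x
    simp only [kinkE, hx] at this
    nlinarith [sq_nonneg (Real.sin (f x))]
  have hc : Continuous p := continuous_iff_continuousAt.2 fun x => (h.dp x).continuousAt
  have hex : ∃ x, 0 ≤ p x := by
    by_contra hcon
    push Not at hcon
    have hanti : Antitone f := antitone_of_deriv_nonpos (fun x => (h.df x).differentiableAt)
      (fun x => by rw [(h.df x).deriv]; exact (hcon x).le)
    have h1 : (n : ℝ) * Real.pi ≤ f 0 := hanti.le_of_tendsto h.top 0
    have h2 : f 0 ≤ 0 := hanti.ge_of_tendsto h.bot 0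
    have : (0 : ℝ) < n * Real.pi := by positivity
    linarith
  by_contra hcon
  push Not at hcon
  obtain ⟨x, hx⟩ := mem_range_of_exists_le_of_exists_ge hc ⟨r, hcon⟩ hex
  exact hne x hx

lemma f_mono (ha : 0 < a) (hn : 0 < n) (h : KinkPair a n f p) : StrictMono f :=
  strictMono_of_deriv_pos fun x => by rw [(h.df x).deriv]; exact h.p_pos ha hn x

lemma f_lt (ha : 0 < a) (hn : 0 < n) (h : KinkPair a n f p) (r : ℝ) : f r < n * Real.pi :=
  lt_of_lt_of_le (h.f_mono ha hn (show r < r + 1 by linarith))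
    ((h.f_mono ha hn).monotone.ge_of_tendsto h.top _)

lemma f_gt (ha : 0 < a) (hn : 0 < n) (h : KinkPair a n f p) (r : ℝ) : 0 < f r :=
  lt_of_le_of_lt ((h.f_mono ha hn).monotone.le_of_tendsto h.bot _)
    (h.f_mono ha hn (show r - 1 < r by linarith))

/-- inverse function -/
lemma exists_inv (ha : 0 < a) (hn : 0 < n) (h : KinkPair a n f p) :
    ∃ R : ℝ → ℝ, (∀ r, R (f r) = r) ∧ (∀ s ∈ Set.Ioo 0 (n * Real.pi), f (R s) = s) ∧
      ∀ s ∈ Set.Ioo 0 (n * Real.pi), HasDerivAt R (p (R s))⁻¹ s := by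
  have hc : Continuous f := continuous_iff_continuousAt.2 fun x => (h.df x).continuousAt
  have hm := h.f_mono ha hn
  refine ⟨Function.invFun f, Function.leftInverse_invFun hm.injective, ?_⟩
  have hinv : ∀ s ∈ Set.Ioo 0 (n * Real.pi), f (Function.invFun f s) = s := by
    intro s hs
    refine Function.invFun_eq ?_
    obtain ⟨x, hx⟩ := (h.bot.eventually_lt_const hs.1).exists
    obtain ⟨y, hy⟩ := (h.top.eventually_const_lt hs.2).exists
    exact mem_range_of_exists_le_of_exists_ge hc ⟨x, hx.le⟩ ⟨y, hy.le⟩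
  refine ⟨hinv, fun s hs => ?_⟩
  have hmem : Set.Ioo 0 (n * Real.pi) ∈ nhds s := Ioo_mem_nhds hs.1 hs.2
  refine HasDerivAt.of_local_left_inverse ?_ (h.df _) (h.p_pos ha hn _).ne' ?_
  · have hmi : StrictMonoOn (Function.invFun f) (Set.Ioo 0 (n * Real.pi)) := by
      intro x hx y hy hxy
      rw [← hinv x hx, ← hinv y hy] at hxy
      exact hm.lt_iff_lt.1 hxy
    refine hmi.continuousAt_of_image_mem_nhds hmem ?_
    convert univ_mem
    rw [Set.eq_univ_iff_forall]
    exact fun r => ⟨f r, ⟨h.f_gt ha hn r, h.f_lt ha hn r⟩,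
      Function.leftInverse_invFun hm.injective r⟩
  · filter_upwards [hmem] with x hx using hinv x hx

/-- The weighted energy cannot stay bounded below by a positive constant. -/
lemma Q_not_ge (ha : 0 < a) (hn : 0 < n) (h : KinkPair a n f p) {c r₀ : ℝ} (hc : 0 < c)
    (hQ : ∀ r, r₀ ≤ r → c ≤ kinkQ a f p r) : False := by
  obtain ⟨k, hk, hkc⟩ : ∃ k : ℝ, 0 < k ∧ k ^ 2 = 2 * c :=
    ⟨Real.sqrt (2 * c), Real.sqrt_pos.2 (by linarith), Real.sq_sqrt (by linarith)⟩
  have hq : ∀ r, r₀ ≤ r → k ≤ (r ^ 2 + a ^ 2) * p r := by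
    intro r hr
    have h1 := hQ r hr
    have hp := h.p_pos ha hn r
    refine le_of_pow_le_pow_left₀ two_ne_zero (by positivity) ?_
    rw [hkc]
    simp only [kinkQ] at h1
    have : 0 ≤ (r ^ 2 + a ^ 2) ^ 2 * Real.sin (f r) ^ 2 := by positivity
    nlinarith
  have hev : ∀ᶠ r in atTop, n * Real.pi - Real.pi / 4 < f r :=
    h.top.eventually_const_lt (by linarith [Real.pi_pos])
  obtain ⟨r₁, hr₁⟩ := ((hev.and (eventually_ge_atTop r₀)).and
    (eventually_ge_atTop (0 : ℝ))).exists
  obtain ⟨⟨hf₁, hr01⟩, hr1⟩ := hr₁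
  have hw : AntitoneOn (fun r => n * Real.pi - f r - k / (r + a)) (Set.Ici r₁) := by
    have hd : ∀ r ∈ Set.Ici r₁, HasDerivAt (fun r => n * Real.pi - f r - k / (r + a))
        (-p r + k / (r + a) ^ 2) r := by
      intro r hr
      have hr : r₁ ≤ r := hr
      have hne : r + a ≠ 0 := by linarith
      have := ((h.df r).const_sub (n * Real.pi)).sub
        ((hasDerivAt_const r k).div ((hasDerivAt_id r).add_const a) hne)
      refine this.congr_deriv ?_
      simp
      ring
    refine antitoneOn_of_deriv_nonpos (convex_Ici r₁)
      (fun x hx => (hd x hx).continuousAt.continuousWithinAt)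
      (fun x hx => (hd x (interior_subset hx)).differentiableAt.differentiableWithinAt) ?_
    intro x hx
    have hx := interior_subset hx
    rw [(hd x hx).deriv]
    have hx : r₁ ≤ x := hx
    have h1 := hq x (hr01.trans hx)
    have hp := h.p_pos ha hn x
    have hpos : 0 < (x + a) ^ 2 := by
      have : 0 < x + a := by linarith
      positivity
    have : k / (x + a) ^ 2 ≤ p x := by
      rw [div_le_iff₀ hpos]
      have : 0 ≤ x * a * p x := by
        have : 0 ≤ x := by linarith
        positivity
      nlinarith
    linarith
  have hwlim : Tendsto (fun r => n * Real.pi - f r - k / (r + a)) atTop (nhds 0) := by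
    have h1 : Tendsto (fun r => k / (r + a)) atTop (nhds 0) :=
      tendsto_const_nhds.div_atTop (tendsto_atTop_add_const_right _ _ tendsto_id)
    have := (h.top.const_sub (n * Real.pi)).sub h1
    simpa using this
  have hu : ∀ r, r₁ ≤ r → k / (r + a) ≤ n * Real.pi - f r := by
    intro r hr
    have : 0 ≤ n * Real.pi - f r - k / (r + a) := by
      refine le_of_tendsto hwlim ?_
      filter_upwards [eventually_ge_atTop r] with x hx
      exact hw (Set.mem_Ici.2 hr) (Set.mem_Ici.2 (hr.trans hx)) hx
    linarith
  have hz : AntitoneOn (fun r => (r ^ 2 + a ^ 2) * p r + k * a / 2 * r) (Set.Ici r₁) := by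
    have hd : ∀ r, HasDerivAt (fun r => (r ^ 2 + a ^ 2) * p r + k * a / 2 * r)
        ((r ^ 2 + a ^ 2) * Real.sin (2 * f r) + k * a / 2) r := by
      intro r
      have := ((((hasDerivAt_id r).pow 2).add_const (a ^ 2)).mul (h.dp r)).add
        ((hasDerivAt_id r).const_mul (k * a / 2))
      refine this.congr_deriv ?_
      have : r ^ 2 + a ^ 2 ≠ 0 := by positivity
      simp only [id, Pi.pow_apply]
      push_cast
      field_simp
      ring
    refine antitoneOn_of_deriv_nonpos (convex_Ici r₁)
      (fun x hx => (hd x).continuousAt.continuousWithinAt)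
      (fun x hx => (hd x).differentiableAt.differentiableWithinAt) ?_
    intro x hx
    have hx : r₁ ≤ x := interior_subset hx
    rw [(hd x).deriv]
    have hx0 : 0 < x + a := by linarith
    have hux := hu x hx
    have hfx : f r₁ ≤ f x := (h.f_mono ha hn).monotone hx
    have hupos : 0 < n * Real.pi - f x := lt_of_lt_of_le (by positivity) hux
    have hs : Real.sin (2 * f x) = - Real.sin (2 * (n * Real.pi - f x)) := by
      have e : 2 * (n * Real.pi - f x) = n * (2 * Real.pi) - 2 * f x := by ring
      rw [e, Real.sin_nat_mul_two_pi_sub, neg_neg]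
    have hsin := Real.mul_le_sin (x := 2 * (n * Real.pi - f x)) (by linarith) (by linarith)
    have h2 : n * Real.pi - f x ≤ 2 / Real.pi * (2 * (n * Real.pi - f x)) := by
      have : 1 ≤ 2 / Real.pi * 2 := by
        rw [div_mul_eq_mul_div, le_div_iff₀ Real.pi_pos]
        linarith [Real.pi_le_four]
      nlinarith
    have h3 : k / (x + a) ≤ - Real.sin (2 * f x) := by linarith
    rw [div_le_iff₀ hx0] at h3
    have hS : 0 ≤ - Real.sin (2 * f x) := by linarith
    have h4 : k * (x + a) ≤ - Real.sin (2 * f x) * (2 * (x ^ 2 + a ^ 2)) := by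
      calc k * (x + a) ≤ (- Real.sin (2 * f x) * (x + a)) * (x + a) := by gcongr
        _ = - Real.sin (2 * f x) * (x + a) ^ 2 := by ring
        _ ≤ _ := by gcongr; nlinarith [sq_nonneg (x - a)]
    have : 0 ≤ k * x := mul_nonneg hk.le (by linarith)
    linarith
  have hp1 := h.p_pos ha hn r₁
  have hq1 : 0 < (r₁ ^ 2 + a ^ 2) * p r₁ := by positivity
  have hka : 0 < k * a / 2 := by positivity
  set d := (r₁ ^ 2 + a ^ 2) * p r₁ / (k * a / 2) with hd
  have hd0 : 0 < d := by positivity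
  have hfin := hz (Set.mem_Ici.2 le_rfl) (Set.mem_Ici.2 (show r₁ ≤ r₁ + d by linarith))
    (show r₁ ≤ r₁ + d by linarith)
  have hdd : k * a / 2 * d = (r₁ ^ 2 + a ^ 2) * p r₁ := by
    rw [hd]; field_simp
  have hp2 := h.p_pos ha hn (r₁ + d)
  have hq2 : 0 < ((r₁ + d) ^ 2 + a ^ 2) * p (r₁ + d) := by positivity
  simp only at hfin
  rw [mul_add (k * a / 2), hdd] at hfin
  linarith

/-- Algebraic monotonicity of the rate. -/
lemma rate_mono {R₁ R₂ p₁ p₂ S : ℝ} (ha : 0 < a) (h0 : 0 ≤ R₁) (h12 : R₁ ≤ R₂)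
    (hp₁ : 0 < p₁) (hp₂ : 0 < p₂)
    (hQ2 : 0 ≤ (R₂ ^ 2 + a ^ 2) ^ 2 * (p₂ ^ 2 / 2 - S))
    (hS : 0 ≤ S)
    (hQ : (R₂ ^ 2 + a ^ 2) ^ 2 * (p₂ ^ 2 / 2 - S) ≤ (R₁ ^ 2 + a ^ 2) ^ 2 * (p₁ ^ 2 / 2 - S)) :
    4 * R₁ * (R₁ ^ 2 + a ^ 2) * S * p₁⁻¹ ≤ 4 * R₂ * (R₂ ^ 2 + a ^ 2) * S * p₂⁻¹ := by
  have hg : R₁ ^ 2 + a ^ 2 ≤ R₂ ^ 2 + a ^ 2 := by gcongr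
  have hg1 : 0 < R₁ ^ 2 + a ^ 2 := by positivity
  have hg2 : 0 < R₂ ^ 2 + a ^ 2 := by positivity
  set x := R₁ ^ 2 + a ^ 2
  set y := R₂ ^ 2 + a ^ 2
  have hR2 : 0 ≤ R₂ := h0.trans h12
  have hp : 0 ≤ p₂ ^ 2 / 2 - S := by
    by_contra hc
    push Not at hc
    have : y ^ 2 * (p₂ ^ 2 / 2 - S) < 0 := mul_neg_of_pos_of_neg (by positivity) hc
    linarith
  have hpp : p₂ ≤ p₁ := by
    refine le_of_pow_le_pow_left₀ two_ne_zero hp₁.le ?_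
    have : x ^ 2 * (p₂ ^ 2 / 2 - S) ≤ x ^ 2 * (p₁ ^ 2 / 2 - S) := by
      refine le_trans ?_ hQ
      gcongr
    have := le_of_mul_le_mul_left this (by positivity)
    linarith
  gcongr

lemma compare {f₁ p₁ f₂ p₂ : ℝ → ℝ} (ha : 0 < a) (hn : 0 < n) (h1 : KinkPair a n f₁ p₁)
    (h2 : KinkPair a n f₂ p₂) {r₁ r₂ : ℝ} (h0 : 0 ≤ r₁) (h12 : r₁ ≤ r₂) (hf : f₁ r₁ = f₂ r₂) :
    kinkQ a f₁ p₁ r₁ ≤ kinkQ a f₂ p₂ r₂ := by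
  by_contra hcon
  push Not at hcon
  obtain ⟨R₁, hl1, hr1, hd1⟩ := h1.exists_inv ha hn
  obtain ⟨R₂, hl2, hr2, hd2⟩ := h2.exists_inv ha hn
  set s₀ := f₁ r₁ with hs₀
  have hs0pos : 0 < s₀ := h1.f_gt ha hn _
  set B₀ := kinkQ a f₁ p₁ r₁ - kinkQ a f₂ p₂ r₂ with hB₀
  have hB0 : 0 < B₀ := by linarith
  have hI : ∀ s, s₀ ≤ s → s < n * Real.pi → s ∈ Set.Ioo 0 (n * Real.pi) :=
    fun s hs hs' => ⟨by linarith, hs'⟩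
  set A : ℝ → ℝ := fun s => R₂ s - R₁ s with hA
  set B : ℝ → ℝ := fun s => kinkQ a f₁ p₁ (R₁ s) - kinkQ a f₂ p₂ (R₂ s) with hB
  have dA : ∀ s ∈ Set.Ioo 0 (n * Real.pi), HasDerivAt A ((p₂ (R₂ s))⁻¹ - (p₁ (R₁ s))⁻¹) s :=
    fun s hs => (hd2 s hs).sub (hd1 s hs)
  have dB : ∀ s ∈ Set.Ioo 0 (n * Real.pi), HasDerivAt B
      (4 * R₂ s * (R₂ s ^ 2 + a ^ 2) * Real.sin s ^ 2 * (p₂ (R₂ s))⁻¹ -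
        4 * R₁ s * (R₁ s ^ 2 + a ^ 2) * Real.sin s ^ 2 * (p₁ (R₁ s))⁻¹) s := by
    intro s hs
    have := ((h1.dQ ha (R₁ s)).comp s (hd1 s hs)).sub ((h2.dQ ha (R₂ s)).comp s (hd2 s hs))
    refine this.congr_deriv ?_
    rw [hr1 s hs, hr2 s hs]
    ring
  have hR1nn : ∀ s, s₀ ≤ s → s < n * Real.pi → 0 ≤ R₁ s := by
    intro s hs hs'
    have : f₁ r₁ ≤ f₁ (R₁ s) := by rw [hr1 s (hI s hs hs')]; exact hs
    exact h0.trans ((h1.f_mono ha hn).le_iff_le.1 this)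
  have main : ∀ t, s₀ ≤ t → t < n * Real.pi → 0 ≤ A t ∧ B₀ ≤ B t := by
    intro t ht ht'
    have hIt : ∀ s ∈ Set.Icc s₀ t, s ∈ Set.Ioo 0 (n * Real.pi) :=
      fun s hs => hI s hs.1 (hs.2.trans_lt ht')
    have cA : ContinuousOn A (Set.Icc s₀ t) :=
      fun s hs => (dA s (hIt s hs)).continuousAt.continuousWithinAt
    have cB : ContinuousOn B (Set.Icc s₀ t) :=
      fun s hs => (dB s (hIt s hs)).continuousAt.continuousWithinAt
    have hclosed : IsClosed ({s | 0 ≤ A s ∧ B₀ ≤ B s} ∩ Set.Icc s₀ t) := by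
      have e : {s | 0 ≤ A s ∧ B₀ ≤ B s} ∩ Set.Icc s₀ t =
          (Set.Icc s₀ t ∩ A ⁻¹' Set.Ici 0) ∩ (Set.Icc s₀ t ∩ B ⁻¹' Set.Ici B₀) := by
        ext s
        simp only [Set.mem_inter_iff, Set.mem_ofPred_eq, Set.mem_preimage, Set.mem_Ici]
        tauto
      rw [e]
      exact (cA.preimage_isClosed_of_isClosed isClosed_Icc isClosed_Ici).inter
        (cB.preimage_isClosed_of_isClosed isClosed_Icc isClosed_Ici)
    have hstart : s₀ ∈ {s | 0 ≤ A s ∧ B₀ ≤ B s} := by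
      have e1 : R₁ s₀ = r₁ := hl1 r₁
      have e2 : R₂ s₀ = r₂ := by rw [hf]; exact hl2 r₂
      simp only [Set.mem_ofPred_eq, hA, hB, e1, e2]
      exact ⟨by linarith, le_rfl⟩
    refine (hclosed.Icc_subset_of_forall_exists_gt hstart ?_) ⟨ht, le_rfl⟩
    rintro x ⟨⟨hAx, hBx⟩, hx⟩ y hy
    have hxI := hIt x ⟨hx.1, hx.2.le⟩
    have evA : ∀ᶠ s in nhdsWithin x (Set.Ioi x), 0 ≤ A s := by
      rcases hAx.lt_or_eq with hpos | hzero
      · filter_upwards [((dA x hxI).continuousAt.eventually_const_lt hpos).filter_mono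
          nhdsWithin_le_nhds] with s hs using hs.le
      · have hRR : R₂ x = R₁ x := by simp only [hA] at hzero; linarith
        have hlt : p₂ (R₂ x) < p₁ (R₁ x) := by
          refine lt_of_pow_lt_pow_left₀ 2 (h1.p_pos ha hn _).le ?_
          have hBx' : 0 < B x := by linarith
          simp only [hB, kinkQ, hr1 x hxI, hr2 x hxI] at hBx'
          rw [hRR] at hBx' ⊢
          have hpos : 0 < (R₁ x ^ 2 + a ^ 2) ^ 2 := by positivity
          rw [← mul_sub] at hBx'
          have := (mul_pos_iff_of_pos_left hpos).1 hBx'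
          linarith
        have hd : 0 < (p₂ (R₂ x))⁻¹ - (p₁ (R₁ x))⁻¹ :=
          sub_pos.2 ((inv_lt_inv₀ (h1.p_pos ha hn _) (h2.p_pos ha hn _)).2 hlt)
        have hsl := (hasDerivAt_iff_tendsto_slope.1 (dA x hxI)).eventually_const_lt hd
        have hsl' := hsl.filter_mono
          (nhdsWithin_mono x (fun z (hz : x < z) => (ne_of_gt hz : z ≠ x)))
        filter_upwards [hsl', self_mem_nhdsWithin] with s hs hxs
        have hxs : x < s := hxs
        rw [slope_def_field, ← hzero, sub_zero] at hs
        exact ((div_pos_iff_of_pos_right (sub_pos.2 hxs)).1 hs).le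
    have evB : ∀ᶠ s in nhdsWithin x (Set.Ioi x), 0 < B s :=
      ((dB x hxI).continuousAt.eventually_const_lt (hB0.trans_le hBx)).filter_mono
        nhdsWithin_le_nhds
    obtain ⟨u, hu, hxu⟩ := (mem_nhdsGT_iff_exists_Ioo_subset).1 (evA.and evB)
    have hu : x < u := hu
    have hy : x < y := hy
    obtain ⟨z, hxz, hz⟩ := exists_between (lt_min (lt_min hu hy) hx.2)
    have hzu : z < u := hz.trans_le ((min_le_left _ _).trans (min_le_left _ _))
    have hzy : z < y := hz.trans_le ((min_le_left _ _).trans (min_le_right _ _))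
    have hzt : z < t := hz.trans_le (min_le_right _ _)
    have hsub : ∀ s ∈ Set.Icc x z, s ∈ Set.Ioo 0 (n * Real.pi) :=
      fun s hs => hIt s ⟨hx.1.trans hs.1, hs.2.trans hzt.le⟩
    have hmono : MonotoneOn B (Set.Icc x z) := by
      refine monotoneOn_of_deriv_nonneg (convex_Icc x z)
        (fun s hs => (dB s (hsub s hs)).continuousAt.continuousWithinAt)
        (fun s hs => (dB s (hsub s (interior_subset hs))).differentiableAt.differentiableWithinAt)
        ?_
      intro s hs
      have hsI := hsub s (interior_subset hs)
      rw [interior_Icc] at hs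
      rw [(dB s hsI).deriv]
      obtain ⟨hAs, hBs⟩ := hxu ⟨hs.1, hs.2.trans hzu⟩
      refine sub_nonneg.2 (rate_mono ha (hR1nn s (hx.1.trans hs.1.le) hsI.2) ?_
        (h1.p_pos ha hn _) (h2.p_pos ha hn _) ?_ (sq_nonneg _) ?_)
      · simp only [hA] at hAs; linarith
      · have := (h2.Q_pos ha hn (R₂ s)).le
        simpa only [kinkQ, hr2 s hsI] using this
      · simp only [hB, kinkQ, hr1 s hsI, hr2 s hsI] at hBs
        linarith
    refine ⟨z, ⟨?_, ?_⟩, hxz, hzy.le⟩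
    · exact (hxu ⟨hxz, hzu⟩).1
    · exact hBx.trans (hmono ⟨le_rfl, hxz.le⟩ ⟨hxz.le, le_rfl⟩ hxz.le)
  refine h1.Q_not_ge ha hn hB0 (r₀ := r₁) fun r hr => ?_
  have := (main (f₁ r) ((h1.f_mono ha hn).monotone hr) (h1.f_lt ha hn r)).2
  simp only [hB, hl1] at this
  linarith [h2.Q_pos ha hn (R₂ (f₁ r))]

lemma E_lt {f₁ p₁ f₂ p₂ : ℝ → ℝ} (ha : 0 < a) (hn : 0 < n) (h1 : KinkPair a n f₁ p₁)
    (h2 : KinkPair a n f₂ p₂) (hlt : f₁ 0 < f₂ 0) : kinkE f₂ p₂ 0 < kinkE f₁ p₁ 0 := by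
  obtain ⟨R₁, hl1, hr1, hd1⟩ := h1.exists_inv ha hn
  have hs : f₂ 0 ∈ Set.Ioo 0 (n * Real.pi) := ⟨h2.f_gt ha hn 0, h2.f_lt ha hn 0⟩
  set ρ := R₁ (f₂ 0) with hρ
  have hfρ : f₁ ρ = f₂ 0 := hr1 _ hs
  have hρ0 : 0 < ρ := by
    rw [← hfρ] at hlt
    exact (h1.f_mono ha hn).lt_iff_lt.1 hlt
  have hc := h2.compare ha hn h1 le_rfl hρ0.le hfρ.symm
  have hQ : kinkQ a f₁ p₁ ρ < kinkQ a f₁ p₁ 0 := by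
    have hanti := h1.Q_anti ha
    refine lt_of_le_of_ne (hanti (Set.mem_Ici.2 le_rfl) (Set.mem_Ici.2 hρ0.le) hρ0.le) fun heq => ?_
    have hconst : ∀ r ∈ Set.Ioo 0 ρ, kinkQ a f₁ p₁ r = kinkQ a f₁ p₁ 0 := by
      intro r hr
      refine le_antisymm (hanti (Set.mem_Ici.2 le_rfl) (Set.mem_Ici.2 hr.1.le) hr.1.le) ?_
      rw [← heq]
      exact hanti (Set.mem_Ici.2 hr.1.le) (Set.mem_Ici.2 hρ0.le) hr.2.le
    have hsin : ∀ r ∈ Set.Ioo 0 ρ, Real.sin (f₁ r) = 0 := by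
      intro r hr
      have hev : kinkQ a f₁ p₁ =ᶠ[nhds r] fun _ => kinkQ a f₁ p₁ 0 := by
        filter_upwards [Ioo_mem_nhds hr.1 hr.2] with x hx using hconst x hx
      have hd := (h1.dQ ha r).unique ((hasDerivAt_const r _).congr_of_eventuallyEq hev)
      have hpos : 0 < 4 * r * (r ^ 2 + a ^ 2) := by
        have := hr.1
        positivity
      have : Real.sin (f₁ r) ^ 2 = 0 := by
        rcases mul_eq_zero.1 (neg_eq_zero.1 hd) with h | h
        · linarith
        · exact h
      exact pow_eq_zero_iff (two_ne_zero) |>.1 this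
    have hm : ρ / 2 ∈ Set.Ioo 0 ρ := ⟨by linarith, by linarith⟩
    have hev : (fun r => Real.sin (f₁ r)) =ᶠ[nhds (ρ / 2)] fun _ => 0 := by
      filter_upwards [Ioo_mem_nhds hm.1 hm.2] with x hx using hsin x hx
    have hd := (h1.df (ρ / 2)).sin.unique
      ((hasDerivAt_const (ρ / 2) (0 : ℝ)).congr_of_eventuallyEq hev)
    have hcos : Real.cos (f₁ (ρ / 2)) = 0 :=
      (mul_eq_zero.1 hd).resolve_right (h1.p_pos ha hn _).ne'
    have := Real.sin_sq_add_cos_sq (f₁ (ρ / 2))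
    rw [hcos, hsin _ hm] at this
    norm_num at this
  have hfin := hc.trans_lt hQ
  simp only [kinkQ] at hfin
  exact lt_of_mul_lt_mul_left hfin (by positivity)

lemma eq_of {f₁ p₁ f₂ p₂ : ℝ → ℝ} (ha : 0 < a) (hn : 0 < n) (h1 : KinkPair a n f₁ p₁)
    (h2 : KinkPair a n f₂ p₂) : f₁ = f₂ := by
  have hEr : ∀ {f p : ℝ → ℝ}, KinkPair a n f p →
      kinkE (fun r => n * Real.pi - f (-r)) (fun r => p (-r)) 0 = kinkE f p 0 := by
    intro f p _
    have e : ((-1 : ℝ) ^ n) ^ 2 = 1 := by rw [← pow_mul, mul_comm, pow_mul]; norm_num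
    simp [kinkE, Real.sin_nat_mul_pi_sub, mul_pow, e]
  have hno : ∀ {f p g q : ℝ → ℝ}, KinkPair a n f p → KinkPair a n g q → ¬ f 0 < g 0 := by
    intro f p g q hf hg hlt
    have e1 := hf.E_lt ha hn hg hlt
    have e2 := hg.reflect.E_lt ha hn hf.reflect (by simpa using hlt)
    rw [hEr hf, hEr hg] at e2
    exact lt_asymm e1 e2
  have h0 : f₁ 0 = f₂ 0 := le_antisymm (not_lt.1 (hno h2 h1)) (not_lt.1 (hno h1 h2))
  have hQ := le_antisymm (h1.compare ha hn h2 le_rfl le_rfl h0)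
    (h2.compare ha hn h1 le_rfl le_rfl h0.symm)
  have hp : p₁ 0 = p₂ 0 := by
    simp only [kinkQ, h0] at hQ
    have := mul_left_cancel₀ (by positivity) hQ
    refine (pow_left_inj₀ (h1.p_pos ha hn 0).le (h2.p_pos ha hn 0).le two_ne_zero).1 ?_
    linarith
  exact ode_unique a ha f₁ p₁ f₂ p₂ h1.df h1.dp h2.df h2.dp 0 h0 hp

lemma of_contDiff {φ : ℝ → ℝ} (hφ : ContDiff ℝ 2 φ)
    (hφeq : ∀ r : ℝ, deriv (deriv φ) r + (2 * r / (r ^ 2 + a ^ 2)) * deriv φ r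
        = Real.sin (2 * φ r))
    (hφbot : Tendsto φ atBot (nhds 0))
    (hφtop : Tendsto φ atTop (nhds (n * Real.pi))) : KinkPair a n φ (deriv φ) where
  df r := (hφ.differentiable (by norm_num) r).hasDerivAt
  dp r := by
    have h1 : ContDiff ℝ 1 (deriv φ) := ((contDiff_succ_iff_deriv (n := 1)).1 hφ).2.2
    refine (h1.differentiable (by norm_num) r).hasDerivAt.congr_deriv ?_
    linarith [hφeq r]
  bot := hφbot
  top := hφtop

end KinkPair

/-- Uniqueness of the `n`-kink: two `C²` solutions of the wormhole kink ODE with limits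
`0` at `-∞` and `nπ` at `+∞` coincide. -/
theorem nkink_unique (a : ℝ) (ha : 0 < a) (n : ℕ) (hn : 0 < n)
    (φ ψ : ℝ → ℝ)
    (hφ : ContDiff ℝ 2 φ)
    (hφeq : ∀ r : ℝ, deriv (deriv φ) r + (2 * r / (r ^ 2 + a ^ 2)) * deriv φ r
        = Real.sin (2 * φ r))
    (hφbot : Tendsto φ atBot (nhds 0))
    (hφtop : Tendsto φ atTop (nhds (n * Real.pi)))
    (hψ : ContDiff ℝ 2 ψ)
    (hψeq : ∀ r : ℝ, deriv (deriv ψ) r + (2 * r / (r ^ 2 + a ^ 2)) * deriv ψ r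
        = Real.sin (2 * ψ r))
    (hψbot : Tendsto ψ atBot (nhds 0))
    (hψtop : Tendsto ψ atTop (nhds (n * Real.pi))) :
    φ = ψ := by
  exact KinkPair.eq_of ha hn (KinkPair.of_contDiff hφ hφeq hφbot hφtop)
    (KinkPair.of_contDiff hψ hψeq hψbot hψtop)
end

section
/- For every real a > 0 and every positive integer n, any n-kink φ is symmetric with respect to its midpoint: φ(r) + φ(−r) = n·π for all r ∈ ℝ; in particular φ(0) = n·π/2. -/
open Real Filter

lemma le_of_hasDeriv {f f' : ℝ → ℝ} {x y : ℝ} (hxy : x ≤ y)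
    (hf : ∀ z ∈ Set.Icc x y, HasDerivAt f (f' z) z) (h0 : ∀ z ∈ Set.Ioo x y, 0 ≤ f' z) :
    f x ≤ f y := by
  refine monotoneOn_of_hasDerivWithinAt_nonneg (convex_Icc x y)
    (fun z hz => (hf z hz).continuousAt.continuousWithinAt)
    (fun z hz => (hf z (interior_subset hz)).hasDerivWithinAt)
    (fun z hz => h0 z (by rwa [interior_Icc] at hz)) (Set.left_mem_Icc.2 hxy) (Set.right_mem_Icc.2 hxy) hxy

lemma lt_of_hasDeriv {f f' : ℝ → ℝ} {x y : ℝ} (hxy : x < y)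
    (hf : ∀ z ∈ Set.Icc x y, HasDerivAt f (f' z) z) (h0 : ∀ z ∈ Set.Ioo x y, 0 < f' z) :
    f x < f y := by
  refine strictMonoOn_of_deriv_pos (convex_Icc x y)
    (fun z hz => (hf z hz).continuousAt.continuousWithinAt)
    (fun z hz => ?_) (Set.left_mem_Icc.2 hxy.le) (Set.right_mem_Icc.2 hxy.le) hxy
  rw [(hf z (interior_subset hz)).deriv]
  rw [interior_Icc] at hz
  exact h0 z hz

/-- A solution of the ODE in first-order form. -/
structure WSol (a : ℝ) (φ p : ℝ → ℝ) : Prop where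
  d1 : ∀ r, HasDerivAt φ (p r) r
  d2 : ∀ r, HasDerivAt p (Real.sin (2 * φ r) - (2 * r / (r ^ 2 + a ^ 2)) * p r) r

lemma g_bound {a : ℝ} (ha : 0 < a) (r : ℝ) : |2 * r / (r ^ 2 + a ^ 2)| ≤ 1 / a := by
  have h : 0 < r ^ 2 + a ^ 2 := by positivity
  rw [abs_div, abs_of_pos h, div_le_div_iff₀ h ha, abs_mul, abs_two]
  nlinarith [sq_nonneg (|r| - a), sq_abs r]

lemma WSol.uniq {a : ℝ} (ha : 0 < a) {φ p ψ q : ℝ → ℝ} (h1 : WSol a φ p) (h2 : WSol a ψ q)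
    (t₀ : ℝ) (e1 : φ t₀ = ψ t₀) (e2 : p t₀ = q t₀) : φ = ψ := by
  let v : ℝ → ℝ × ℝ → ℝ × ℝ := fun t x =>
    (x.2, Real.sin (2 * x.1) - (2 * t / (t ^ 2 + a ^ 2)) * x.2)
  have hK : (0:ℝ) ≤ 2 + 1 / a := by positivity
  have hv : ∀ t, LipschitzOnWith ⟨2 + 1 / a, hK⟩ (v t) Set.univ := by
    intro t
    refine LipschitzOnWith.of_dist_le_mul ?_
    rintro ⟨x1, x2⟩ - ⟨y1, y2⟩ -
    simp only [v, Prod.dist_eq, Real.dist_eq]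
    change _ ≤ (2 + 1 / a) * _
    set M := max |x1 - y1| |x2 - y2| with hM
    have m1 : |x1 - y1| ≤ M := le_max_left _ _
    have m2 : |x2 - y2| ≤ M := le_max_right _ _
    have hM0 : 0 ≤ M := (abs_nonneg _).trans m1
    have ha' : 0 ≤ 1 / a := by positivity
    have hsin : |Real.sin (2 * x1) - Real.sin (2 * y1)| ≤ 2 * |x1 - y1| := by
      have := Real.abs_sin_sub_sin_le (2 * x1) (2 * y1)
      rwa [← mul_sub, abs_mul, abs_two] at this
    have hg := g_bound ha t
    set g := 2 * t / (t ^ 2 + a ^ 2)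
    refine max_le ?_ ?_
    · nlinarith [mul_nonneg ha' hM0]
    · have e : Real.sin (2 * x1) - g * x2 - (Real.sin (2 * y1) - g * y2)
        = (Real.sin (2 * x1) - Real.sin (2 * y1)) - g * (x2 - y2) := by ring
      rw [e]
      refine (abs_sub _ _).trans ?_
      rw [abs_mul]
      have := mul_le_mul hg m2 (abs_nonneg _) ha'
      nlinarith
  have := ODE_solution_unique_univ (f := fun t => (φ t, p t)) (g := fun t => (ψ t, q t))
    (t₀ := t₀) hv
    (fun t => ⟨(h1.d1 t).prodMk (h1.d2 t), trivial⟩)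
    (fun t => ⟨(h2.d1 t).prodMk (h2.d2 t), trivial⟩) (by simp [e1, e2])
  funext t
  exact congrArg Prod.fst (congrFun this t)

/-- A kink in first-order form. -/
structure WKink (a : ℝ) (n : ℕ) (φ p : ℝ → ℝ) : Prop extends WSol a φ p where
  bot : Tendsto φ atBot (nhds 0)
  top : Tendsto φ atTop (nhds (n * Real.pi))

lemma sin_sq_refl (n : ℕ) (x : ℝ) : Real.sin (n * Real.pi - x) ^ 2 = Real.sin x ^ 2 := by
  have h1 : Real.sin (n * Real.pi) = 0 := Real.sin_nat_mul_pi n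
  have h2 := Real.sin_sq_add_cos_sq (n * Real.pi)
  rw [Real.sin_sub, h1]
  rw [h1] at h2
  have : Real.cos (n * Real.pi) ^ 2 = 1 := by linarith
  ring_nf
  ring_nf at this
  rw [this]; ring

lemma WKink.refl {a : ℝ} {n : ℕ} {φ p : ℝ → ℝ} (h : WKink a n φ p) :
    WKink a n (fun r => n * Real.pi - φ (-r)) (fun r => p (-r)) where
  d1 r := by
    have := ((h.d1 (-r)).comp r (hasDerivAt_neg r)).const_sub (n * Real.pi)
    simpa [Function.comp_def] using this
  d2 r := by
    have := (h.d2 (-r)).comp r (hasDerivAt_neg r)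
    refine this.congr_deriv ?_
    have e : Real.sin (2 * (n * Real.pi - φ (-r))) = - Real.sin (2 * φ (-r)) := by
      rw [show 2 * (n * Real.pi - φ (-r)) = n * (2 * Real.pi) - 2 * φ (-r) by ring]
      exact Real.sin_nat_mul_two_pi_sub _ _
    simp only [e]
    have : (-r)^2 = r^2 := by ring
    rw [this]
    ring
  bot := by
    have := (h.top.comp tendsto_neg_atBot_atTop).const_sub (n * Real.pi)
    simpa [Function.comp_def] using this
  top := by
    have := (h.bot.comp tendsto_neg_atTop_atBot).const_sub (n * Real.pi)
    simpa [Function.comp_def] using this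

/-- The energy. -/
noncomputable def wE (φ p : ℝ → ℝ) (r : ℝ) : ℝ := p r ^ 2 / 2 - Real.sin (φ r) ^ 2

lemma WSol.dE {a : ℝ} {φ p : ℝ → ℝ} (h : WSol a φ p) (r : ℝ) :
    HasDerivAt (wE φ p) (-(2 * r / (r ^ 2 + a ^ 2)) * p r ^ 2) r := by
  have := (((h.d2 r).pow 2).div_const 2).sub (((h.d1 r).sin).pow 2)
  refine this.congr_deriv ?_
  rw [Real.sin_two_mul]
  push_cast
  ring

/-- The weighted energy. -/
noncomputable def wK (a : ℝ) (φ p : ℝ → ℝ) (r : ℝ) : ℝ := (r ^ 2 + a ^ 2) ^ 2 * wE φ p r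

lemma WSol.dK {a : ℝ} (ha : 0 < a) {φ p : ℝ → ℝ} (h : WSol a φ p) (r : ℝ) :
    HasDerivAt (wK a φ p) (-(4 * r * (r ^ 2 + a ^ 2) * Real.sin (φ r) ^ 2)) r := by
  have := ((((hasDerivAt_id r).pow 2).add_const (a ^ 2)).pow 2).mul (h.dE r)
  refine this.congr_deriv ?_
  have hh : r ^ 2 + a ^ 2 ≠ 0 := by positivity
  simp [wE]
  field_simp
  ring

lemma WKink.E_pos_right {a : ℝ} (ha : 0 < a) {n : ℕ} (hn : 0 < n) {φ p : ℝ → ℝ}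
    (h : WKink a n φ p) (r : ℝ) (hr : 0 ≤ r) : 0 < wE φ p r := by
  have anti : ∀ x y, 0 ≤ x → x ≤ y → wE φ p y ≤ wE φ p x := by
    intro x y hx hxy
    have := le_of_hasDeriv (f := fun r => - wE φ p r) hxy (fun z _ => (h.dE z).neg) (by
      intro z hz
      have : 0 ≤ z := hx.trans hz.1.le
      have : 0 ≤ (2 * z / (z ^ 2 + a ^ 2)) * p z ^ 2 := by positivity
      linarith)
    simpa using this
  have hs : Tendsto (fun r => Real.sin (φ r) ^ 2) atTop (nhds 0) := by
    have := ((Real.continuous_sin.tendsto _).comp h.top).pow 2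
    simpa [Function.comp_def] using this
  have nonneg : ∀ x, 0 ≤ x → 0 ≤ wE φ p x := by
    intro x hx
    by_contra hneg
    push Not at hneg
    have : - wE φ p x ≤ 0 := by
      refine ge_of_tendsto hs ?_
      filter_upwards [eventually_ge_atTop x] with y hy
      have := anti x y hx hy
      have h2 : wE φ p y = p y ^ 2 / 2 - Real.sin (φ y) ^ 2 := rfl
      nlinarith [sq_nonneg (p y)]
    linarith
  rcases (nonneg r hr).lt_or_eq with hlt | heq
  · exact hlt
  exfalso
  have z0 : ∀ y, r ≤ y → wE φ p y = 0 := fun y hy =>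
    le_antisymm (heq ▸ anti r y hr hy) (nonneg y (hr.trans hy))
  have hd : HasDerivAt (wE φ p) 0 (r + 1) := by
    refine (hasDerivAt_const (r + 1) (0:ℝ)).congr_of_eventuallyEq ?_
    filter_upwards [eventually_ge_nhds (show r < r + 1 by linarith)] with y hy
    exact z0 y hy
  have e1 := hd.unique (h.dE (r + 1))
  have hpos : 0 < 2 * (r + 1) / ((r + 1) ^ 2 + a ^ 2) := by positivity
  have p0 : p (r + 1) = 0 := by
    have : p (r + 1) ^ 2 = 0 := by
      rcases mul_eq_zero.1 e1.symm with h | h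
      · linarith
      · exact h
    exact pow_eq_zero_iff (two_ne_zero) |>.1 this
  have s0 : Real.sin (φ (r + 1)) = 0 := by
    have := z0 (r + 1) (by linarith)
    simp only [wE, p0] at this
    have : Real.sin (φ (r + 1)) ^ 2 = 0 := by linarith
    exact pow_eq_zero_iff (two_ne_zero) |>.1 this
  have hc : WSol a (fun _ => φ (r + 1)) (fun _ => 0) :=
    ⟨fun t => hasDerivAt_const _ _, fun t => by
      have := hasDerivAt_const t (0:ℝ)
      refine this.congr_deriv ?_
      rw [Real.sin_two_mul, s0]; ring⟩
  have hφ := WSol.uniq ha h.toWSol hc (r + 1) rfl p0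
  have b := h.bot
  have t := h.top
  rw [hφ] at b t
  have b' := tendsto_nhds_unique b tendsto_const_nhds
  have t' := tendsto_nhds_unique t tendsto_const_nhds
  have : 0 < (n:ℝ) * Real.pi := by positivity
  linarith

lemma WKink.E_pos {a : ℝ} (ha : 0 < a) {n : ℕ} (hn : 0 < n) {φ p : ℝ → ℝ}
    (h : WKink a n φ p) (r : ℝ) : 0 < wE φ p r := by
  rcases le_total 0 r with hr | hr
  · exact h.E_pos_right ha hn r hr
  · have := h.refl.E_pos_right ha hn (-r) (by linarith)
    simpa [wE, sin_sq_refl] using this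

lemma WKink.p_pos {a : ℝ} (ha : 0 < a) {n : ℕ} (hn : 0 < n) {φ p : ℝ → ℝ}
    (h : WKink a n φ p) (r : ℝ) : 0 < p r := by
  have hne : ∀ x, p x ≠ 0 := by
    intro x hx
    have := h.E_pos ha hn x
    simp only [wE, hx] at this
    nlinarith [sq_nonneg (Real.sin (φ x))]
  have hcont : Continuous p := continuous_iff_continuousAt.2 fun x => (h.d2 x).continuousAt
  by_contra hr
  have hr' : p r < 0 := lt_of_le_of_ne (not_lt.1 hr) (hne r)
  have hneg : ∀ x, p x < 0 := by
    intro x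
    by_contra hx
    have := mem_range_of_exists_le_of_exists_ge hcont ⟨r, hr'.le⟩ ⟨x, not_lt.1 hx⟩
    obtain ⟨y, hy⟩ := this
    exact hne y hy
  have hanti : StrictAnti φ := strictAnti_of_deriv_neg fun x => by
    rw [(h.d1 x).deriv]; exact hneg x
  have h1 : φ 0 ≤ 0 := Antitone.ge_of_tendsto hanti.antitone h.bot 0
  have h2 : n * Real.pi ≤ φ 0 := Antitone.le_of_tendsto hanti.antitone h.top 0
  have : 0 < (n:ℝ) * Real.pi := by positivity
  linarith

lemma WKink.K_decay {a : ℝ} (ha : 0 < a) {n : ℕ} (hn : 0 < n) {φ p : ℝ → ℝ}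
    (h : WKink a n φ p) (δ r0 : ℝ) (hδ : 0 < δ) (hK : ∀ r, r0 ≤ r → δ ≤ wK a φ p r) : False := by
  have hmono : StrictMono φ := strictMono_of_hasDerivAt_pos h.d1 (h.p_pos ha hn)
  obtain ⟨r2, hr2⟩ : ∃ r2, ∀ r, r2 ≤ r → n * Real.pi - Real.pi / 2 ≤ φ r := by
    have : ∀ᶠ r in atTop, n * Real.pi - Real.pi / 2 ≤ φ r :=
      h.top.eventually_const_le (by linarith [Real.pi_pos])
    exact eventually_atTop.1 this
  set r1 := max (max r0 r2) (max 1 a) with hr1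
  have l0 : r0 ≤ r1 := (le_max_left _ _).trans (le_max_left _ _)
  have l2 : r2 ≤ r1 := (le_max_right _ _).trans (le_max_left _ _)
  have l1 : 1 ≤ r1 := (le_max_left _ _).trans (le_max_right _ _)
  have la : a ≤ r1 := (le_max_right _ _).trans (le_max_right _ _)
  clear_value r1
  set c := Real.sqrt (δ / 2) with hc
  have hc0 : 0 < c := Real.sqrt_pos.2 (by linarith)
  have hc2 : c ^ 2 = δ / 2 := Real.sq_sqrt (by linarith)
  have hp : ∀ r, r1 ≤ r → c / r ^ 2 ≤ p r := by
    intro r hr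
    have hr0 : 0 < r := by linarith
    have h1 := hK r (l0.trans hr)
    simp only [wK, wE] at h1
    have hpp := h.p_pos ha hn r
    have hh : 0 < r ^ 2 + a ^ 2 := by positivity
    have h2 : (2 * c) ^ 2 ≤ ((r ^ 2 + a ^ 2) * p r) ^ 2 := by
      have : 0 ≤ (r ^ 2 + a ^ 2) ^ 2 * Real.sin (φ r) ^ 2 := by positivity
      nlinarith
    have h3 : 2 * c ≤ (r ^ 2 + a ^ 2) * p r := by
      exact (le_abs_self _).trans (abs_le_of_sq_le_sq h2 (by positivity))
    have h4 : a ^ 2 ≤ r ^ 2 := by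
      have : a ≤ r := la.trans hr
      gcongr
    rw [div_le_iff₀ (by positivity)]
    nlinarith
  have hF : ∀ r, r1 ≤ r → c / r ≤ n * Real.pi - φ r := by
    intro r hr
    have hr0 : 0 < r := by linarith
    have key : ∀ s, r ≤ s → φ r + c / r ≤ φ s + c / s := by
      intro s hs
      refine le_of_hasDeriv (f := fun r => φ r + c / r) (f' := fun r => p r - c / r ^ 2) hs ?_ ?_
      · intro z hz
        have hz0 : z ≠ 0 := by linarith [hz.1]
        have := (h.d1 z).add ((hasDerivAt_inv hz0).const_mul c)
        refine this.congr_deriv ?_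
        field_simp
        ring
      · intro z hz
        have := hp z (hr.trans hz.1.le)
        linarith
    have lim : Tendsto (fun s => φ s + c / s) atTop (nhds (n * Real.pi)) := by
      have := h.top.add (tendsto_const_nhds (x := c).div_atTop tendsto_id)
      simpa using this
    have := ge_of_tendsto lim ((eventually_ge_atTop r).mono key)
    linarith
  set b := 16 * c ^ 2 / Real.pi ^ 2 with hb
  have hb0 : 0 < b := by positivity
  have hK' : ∀ r, r1 ≤ r → b ≤ 4 * r * (r ^ 2 + a ^ 2) * Real.sin (φ r) ^ 2 := by
    intro r hr
    have hr0 : 0 < r := by linarith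
    have hw := hF r hr
    have hcr : 0 < c / r := by positivity
    have hs := Real.mul_le_sin (x := n * Real.pi - φ r) (by linarith)
      (by linarith [hr2 r (l2.trans hr)])
    have hs2 : 2 / Real.pi * (c / r) ≤ Real.sin (n * Real.pi - φ r) := by
      refine le_trans ?_ hs
      gcongr
    have hs3 : (2 / Real.pi * (c / r)) ^ 2 ≤ Real.sin (φ r) ^ 2 := by
      rw [← sin_sq_refl n (φ r)]
      gcongr
    calc b ≤ b * r := by nlinarith
      _ = 4 * r * (r ^ 2) * (2 / Real.pi * (c / r)) ^ 2 := by
        rw [hb]; field_simp; ring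
      _ ≤ _ := by
        gcongr
        nlinarith
  set s := r1 + wK a φ p r1 / b with hs
  have hK1 : 0 < wK a φ p r1 := hδ.trans_le (hK r1 l0)
  have hle : r1 ≤ s := by
    have : 0 < wK a φ p r1 / b := by positivity
    linarith
  have := le_of_hasDeriv (f := fun r => - wK a φ p r - b * r) hle
    (fun z _ => ((h.dK ha z).neg).sub ((hasDerivAt_id z).const_mul b)) (by
      intro z hz
      have := hK' z hz.1.le
      linarith)
  have h5 := hK s (l0.trans hle)
  have h6 : b * s = b * r1 + wK a φ p r1 := by
    rw [hs]; field_simp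
  linarith

lemma rate_neg {a x y pa pb : ℝ} (ha : 0 < a) (hpb : 0 < pb) (hp : pb ≤ pa) (hy : y < 0)
    (hxy : x + y < 0) (hle : y ≤ x) :
    x * (x ^ 2 + a ^ 2) * pa⁻¹ + y * (y ^ 2 + a ^ 2) * pb⁻¹ < 0 := by
  have hpa : 0 < pa := hpb.trans_le hp
  have h2 : y * (y ^ 2 + a ^ 2) * pb⁻¹ < 0 := by
    have : 0 < (y ^ 2 + a ^ 2) * pb⁻¹ := by positivity
    nlinarith
  rcases le_total x 0 with hx | hx
  · have : 0 < (x ^ 2 + a ^ 2) * pa⁻¹ := by positivity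
    nlinarith
  · have h3 : pa⁻¹ ≤ pb⁻¹ := inv_anti₀ hpb hp
    have h4 : x * (x ^ 2 + a ^ 2) * pa⁻¹ ≤ x * (x ^ 2 + a ^ 2) * pb⁻¹ := by gcongr
    have h5 : x * (x ^ 2 + a ^ 2) < - y * (y ^ 2 + a ^ 2) := by
      have : x ^ 2 ≤ y ^ 2 := by nlinarith
      have h6 : 0 < y ^ 2 + a ^ 2 := by positivity
      nlinarith
    have h6 : 0 < pb⁻¹ := by positivity
    nlinarith

lemma WKink.not_gt {a : ℝ} (ha : 0 < a) {n : ℕ} (hn : 0 < n) {φ p : ℝ → ℝ}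
    (h : WKink a n φ p) (h0 : n * Real.pi / 2 < φ 0) : False := by
  have hp := h.p_pos ha hn
  have hE := h.E_pos ha hn
  have hmono : StrictMono φ := strictMono_of_hasDerivAt_pos h.d1 hp
  have hdecay := h.K_decay ha hn
  have hrefl := sin_sq_refl n
  obtain ⟨N, hN⟩ : ∃ N, N = n * Real.pi := ⟨_, rfl⟩
  have htop := h.top
  have hbot := h.bot
  rw [← hN] at h0 htop
  simp only [← hN] at hrefl
  have hN2 : 3 < N := by
    have : (1:ℝ) ≤ n := by exact_mod_cast hn
    have := Real.pi_gt_three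
    nlinarith
  have hlt : ∀ r, φ r < N := fun r =>
    (hmono (lt_add_one r)).trans_le (hmono.monotone.ge_of_tendsto htop (r + 1))
  have hgt : ∀ r, 0 < φ r := fun r =>
    (hmono.monotone.le_of_tendsto hbot (r - 1)).trans_lt (hmono (sub_one_lt r))
  have hcont : Continuous φ := continuous_iff_continuousAt.2 fun x => (h.d1 x).continuousAt
  have hsurj : ∀ u ∈ Set.Ioo 0 N, ∃ r, φ r = u := by
    intro u hu
    have e1 : ∃ x, φ x ≤ u := (hbot.eventually_le_const hu.1).exists
    have e2 : ∃ x, u ≤ φ x := (htop.eventually_const_le hu.2).exists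
    exact mem_range_of_exists_le_of_exists_ge hcont e1 e2
  choose! R hR using hsurj
  have hRφ : ∀ r, R (φ r) = r := fun r => hmono.injective (hR _ ⟨hgt r, hlt r⟩)
  have hRmono : StrictMonoOn R (Set.Ioo 0 N) := by
    intro u hu v hv huv
    rw [← hmono.lt_iff_lt, hR u hu, hR v hv]
    exact huv
  have hRd : ∀ u ∈ Set.Ioo 0 N, HasDerivAt R (p (R u))⁻¹ u := by
    intro u hu
    have hn : Set.Ioo 0 N ∈ nhds u := Ioo_mem_nhds hu.1 hu.2
    refine HasDerivAt.of_local_left_inverse ?_ (h.d1 (R u)) (hp _).ne' ?_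
    · refine hRmono.continuousAt_of_image_mem_nhds hn ?_
      have : R '' Set.Ioo 0 N = Set.univ :=
        Set.eq_univ_of_forall fun r => ⟨φ r, ⟨hgt r, hlt r⟩, hRφ r⟩
      rw [this]
      exact univ_mem
    · filter_upwards [hn] with v hv using hR v hv
  have hRd' : ∀ u ∈ Set.Ioo 0 N, HasDerivAt (fun u => R (N - u)) (-(p (R (N - u)))⁻¹) u := by
    intro u hu
    have := (hRd (N - u) ⟨by linarith [hu.2], by linarith [hu.1]⟩).comp u
      ((hasDerivAt_id u).const_sub N)
    refine this.congr_deriv ?_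
    ring
  obtain ⟨m, hm⟩ : ∃ m, m = N / 2 := ⟨_, rfl⟩
  rw [← hm] at h0
  have hmN : N - m = m := by rw [hm]; ring
  have hsub : ∀ u, m ≤ u → u < N → u ∈ Set.Ioo 0 N := fun u h1 h2 => ⟨by linarith, h2⟩
  have hsub' : ∀ u, m ≤ u → u < N → N - u ∈ Set.Ioo 0 N :=
    fun u h1 h2 => ⟨by linarith, by linarith⟩
  have hmm : m ∈ Set.Ioo 0 N := ⟨by linarith, by linarith⟩
  have hRm : R m < 0 := by
    rw [← hmono.lt_iff_lt, hR m hmm]; exact h0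
  have hRb : ∀ u, m ≤ u → u < N → R (N - u) ≤ R m := fun u h1 h2 =>
    hRmono.monotoneOn (hsub' u h1 h2) hmm (by linarith)
  have hRa : ∀ u, m ≤ u → u < N → R m ≤ R u := fun u h1 h2 =>
    hRmono.monotoneOn hmm (hsub u h1 h2) h1
  set d : ℝ → ℝ := fun u => wE φ p (R u) - wE φ p (R (N - u)) with hd
  have hpp : ∀ u, m ≤ u → u < N → 0 ≤ d u → p (R (N - u)) ≤ p (R u) := by
    intro u h1 h2 h3
    simp only [hd, wE, hR u (hsub u h1 h2), hR _ (hsub' u h1 h2), hrefl] at h3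
    nlinarith [hp (R u), hp (R (N - u))]
  -- R u + R (N - u) is nonincreasing
  have hT : ∀ v, m ≤ v → v < N → (∀ u ∈ Set.Ioo m v, 0 ≤ d u) → R v + R (N - v) < 0 := by
    intro v h1 h2 h3
    have := le_of_hasDeriv (f := fun u => - (R u + R (N - u))) h1
      (fun z hz => ((hRd z (hsub z hz.1 (hz.2.trans_lt h2))).add
        (hRd' z (hsub z hz.1 (hz.2.trans_lt h2)))).neg) (by
        intro z hz
        have := inv_anti₀ (hp _) (hpp z hz.1.le (hz.2.trans h2) (h3 z hz))
        linarith)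
    simp only [hmN] at this
    linarith
  set Δ : ℝ → ℝ := fun u => wK a φ p (R u) - wK a φ p (R (N - u)) with hΔ
  have hΔd : ∀ u ∈ Set.Ioo 0 N, HasDerivAt Δ (-(4 * Real.sin u ^ 2) *
      (R u * (R u ^ 2 + a ^ 2) * (p (R u))⁻¹
        + R (N - u) * (R (N - u) ^ 2 + a ^ 2) * (p (R (N - u)))⁻¹)) u := by
    intro u hu
    have hu' : N - u ∈ Set.Ioo 0 N := ⟨by linarith [hu.2], by linarith [hu.1]⟩
    have := ((h.dK ha (R u)).comp u (hRd u hu)).sub ((h.dK ha (R (N - u))).comp u (hRd' u hu))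
    refine this.congr_deriv ?_
    rw [hR u hu, hR _ hu', hrefl]
    ring
  have hrate : ∀ u, m ≤ u → u < N → (∀ w ∈ Set.Icc m u, 0 ≤ d w) →
      R u * (R u ^ 2 + a ^ 2) * (p (R u))⁻¹
        + R (N - u) * (R (N - u) ^ 2 + a ^ 2) * (p (R (N - u)))⁻¹ < 0 := by
    intro u h1 h2 h3
    exact rate_neg ha (hp _) (hpp u h1 h2 (h3 u ⟨h1, le_rfl⟩))
      ((hRb u h1 h2).trans_lt hRm) (hT u h1 h2 fun w hw => h3 w ⟨hw.1.le, hw.2.le⟩)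
      ((hRb u h1 h2).trans (hRa u h1 h2))
  have hΔmono : ∀ u v, m ≤ u → u ≤ v → v < N → (∀ w ∈ Set.Ico m v, 0 ≤ d w) → Δ u ≤ Δ v := by
    intro u v h1 h2 h3 h4
    refine le_of_hasDeriv h2 (fun z hz => hΔd z (hsub z (h1.trans hz.1) (hz.2.trans_lt h3))) ?_
    intro z hz
    have := hrate z (h1.trans hz.1.le) (hz.2.trans h3)
      (fun w hw => h4 w ⟨hw.1, hw.2.trans_lt hz.2⟩)
    have hs : 0 ≤ 4 * Real.sin z ^ 2 := by positivity
    nlinarith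
  have hΔm : Δ m = 0 := by simp [hΔ, hmN]
  -- the energy is increasing on the left half line
  have hEmono : ∀ x y, x ≤ y → y ≤ 0 → wE φ p x ≤ wE φ p y := by
    intro x y hxy hy
    refine le_of_hasDeriv hxy (fun z _ => h.dE z) ?_
    intro z hz
    have hz0 : 0 ≤ -z := by linarith [hz.2]
    have : 0 ≤ 2 * (-z) / (z ^ 2 + a ^ 2) * p z ^ 2 := by positivity
    calc (0:ℝ) ≤ _ := this
      _ = _ := by ring
  have hElt : ∀ x, x < 0 → wE φ p x < wE φ p 0 := by
    intro x hx
    refine lt_of_hasDeriv hx (fun z _ => h.dE z) ?_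
    intro z hz
    have hz0 : 0 < -z := by linarith [hz.2]
    have := hp z
    have : 0 < 2 * (-z) / (z ^ 2 + a ^ 2) * p z ^ 2 := by positivity
    calc (0:ℝ) < _ := this
      _ = _ := by ring
  have hu0N := hlt 0
  have hdleft : ∀ u, m ≤ u → u ≤ φ 0 → 0 ≤ d u := by
    intro u h1 h2
    have h3 : u < N := h2.trans_lt hu0N
    have h4 : R u ≤ 0 := by
      rw [← hmono.le_iff_le, hR u (hsub u h1 h3)]; exact h2
    have := hEmono _ _ ((hRb u h1 h3).trans (hRa u h1 h3)) h4
    simp only [hd]; linarith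
  have hdu0 : 0 < d (φ 0) := by
    have := hElt _ ((hRb (φ 0) h0.le hu0N).trans_lt hRm)
    simp only [hd, hRφ]; linarith
  have hdcont : ∀ u ∈ Set.Ioo 0 N, ContinuousAt d u := by
    intro u hu
    exact (((h.dE (R u)).comp u (hRd u hu)).sub
      ((h.dE (R (N - u))).comp u (hRd' u hu))).continuousAt
  have hdpos : ∀ v, m ≤ v → v < N → 0 ≤ d v := by
    intro v h1 h2
    by_contra hneg
    have hv0 : φ 0 ≤ v := by
      by_contra hc
      exact hneg (hdleft v h1 (not_le.1 hc).le)
    have hcomp : IsCompact (Set.Icc (φ 0) v ∩ d ⁻¹' Set.Iic 0) := by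
      refine isCompact_Icc.of_isClosed_subset ?_ Set.inter_subset_left
      refine ContinuousOn.preimage_isClosed_of_isClosed ?_ isClosed_Icc isClosed_Iic
      intro z hz
      exact (hdcont z (hsub z (h0.le.trans hz.1) (hz.2.trans_lt h2))).continuousWithinAt
    obtain ⟨w, ⟨⟨hw1, hw2⟩, hw3⟩, hmin⟩ := hcomp.exists_isLeast
      ⟨v, ⟨hv0, le_rfl⟩, (not_le.1 hneg).le⟩
    have hw3 : d w ≤ 0 := hw3
    have hwN : w < N := hw2.trans_lt h2
    have hmw : m ≤ w := h0.le.trans hw1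
    have hbefore : ∀ z ∈ Set.Ico m w, 0 ≤ d z := by
      intro z hz
      rcases le_total z (φ 0) with hz0 | hz0
      · exact hdleft z hz.1 hz0
      · by_contra hzn
        have := hmin ⟨⟨hz0, hz.2.le.trans hw2⟩, (not_le.1 hzn).le⟩
        linarith [hz.2]
    have hΔw := hΔmono m w le_rfl hmw hwN hbefore
    have hTw := hT w hmw hwN (fun z hz => hbefore z ⟨hz.1.le, hz.2⟩)
    have hlt' : R (N - w) < R w := hRmono (hsub' w hmw hwN) (hsub w hmw hwN) (by linarith)
    have hsq : R w ^ 2 < R (N - w) ^ 2 := by nlinarith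
    have hH : (R w ^ 2 + a ^ 2) ^ 2 < (R (N - w) ^ 2 + a ^ 2) ^ 2 := by gcongr
    have e1 := hE (R w)
    rw [hΔm] at hΔw
    simp only [hΔ, wK] at hΔw
    simp only [hd] at hw3
    have e2 : wE φ p (R w) ≤ wE φ p (R (N - w)) := by linarith
    have e3 : (R w ^ 2 + a ^ 2) ^ 2 * wE φ p (R w)
        < (R (N - w) ^ 2 + a ^ 2) ^ 2 * wE φ p (R (N - w)) :=
      mul_lt_mul hH e2 e1 (by positivity)
    linarith
  have hm1 : m ≤ N - 1 := by linarith
  have hA : 0 ≤ Δ (N - 1) := by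
    rw [← hΔm]
    exact hΔmono m (N - 1) le_rfl hm1 (by linarith)
      (fun w hw => hdpos w hw.1 (by linarith [hw.2]))
  have hB : Δ (N - 1) < Δ (N - 1 / 2) := by
    refine lt_of_hasDeriv (by linarith)
      (fun z hz => hΔd z (hsub z (hm1.trans hz.1) (by linarith [hz.2]))) ?_
    intro z hz
    have hzN : z < N := by linarith [hz.2]
    have := hrate z (hm1.trans hz.1.le) hzN
      (fun w hw => hdpos w hw.1 (hw.2.trans_lt hzN))
    have hs : 0 < Real.sin z ^ 2 := by
      rw [← hrefl z]
      have := Real.sin_pos_of_pos_of_lt_pi (x := N - z) (by linarith)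
        (by linarith [Real.pi_gt_three, hz.1])
      positivity
    nlinarith
  refine hdecay (Δ (N - 1 / 2)) (R (N - 1 / 2)) (by linarith) ?_
  intro r hr
  have hin : N - 1 / 2 ∈ Set.Ioo 0 N := ⟨by linarith, by linarith⟩
  have h1 : N - 1 / 2 ≤ φ r := by
    rw [← hR _ hin]; exact hmono.monotone hr
  have h2 := hΔmono (N - 1 / 2) (φ r) (by linarith) h1 (hlt r)
    (fun w hw => hdpos w hw.1 (hw.2.trans (hlt r)))
  have h3 : 0 < wK a φ p (R (N - φ r)) := by
    have := hE (R (N - φ r))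
    unfold wK
    positivity
  have h4 : Δ (φ r) = wK a φ p r - wK a φ p (R (N - φ r)) := by simp only [hΔ, hRφ]
  linarith

/-- Any `n`-kink is symmetric with respect to its midpoint: `φ(r) + φ(−r) = nπ` for all `r`;
in particular `φ(0) = nπ/2`. -/
theorem nkink_symmetric (a : ℝ) (ha : 0 < a) (n : ℕ) (hn : 0 < n)
    (φ : ℝ → ℝ)
    (hφ : ContDiff ℝ 2 φ)
    (hφeq : ∀ r : ℝ, deriv (deriv φ) r + (2 * r / (r ^ 2 + a ^ 2)) * deriv φ r
        = Real.sin (2 * φ r))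
    (hφbot : Tendsto φ atBot (nhds 0))
    (hφtop : Tendsto φ atTop (nhds (n * Real.pi))) :
    (∀ r : ℝ, φ r + φ (-r) = n * Real.pi) ∧ φ 0 = n * Real.pi / 2 := by
  have hd1 : Differentiable ℝ φ := hφ.differentiable (by norm_num)
  have hd2 : Differentiable ℝ (deriv φ) := by
    have : ContDiff ℝ 1 (deriv φ) := by
      have h2 : ContDiff ℝ (1 + 1) φ := by
        rw [one_add_one_eq_two]; exact hφ
      exact (contDiff_succ_iff_deriv.1 h2).2.2
    exact this.differentiable (by norm_num)
  have h : WKink a n φ (deriv φ) :=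
    { d1 := fun r => (hd1 r).hasDerivAt
      d2 := fun r => (hd2 r).hasDerivAt.congr_deriv (by linarith [hφeq r])
      bot := hφbot
      top := hφtop }
  have h0 : φ 0 = n * Real.pi / 2 := by
    rcases lt_trichotomy (φ 0) (n * Real.pi / 2) with hlt | heq | hgt
    · exact (h.refl.not_gt ha hn (by simp only [neg_zero]; linarith)).elim
    · exact heq
    · exact (h.not_gt ha hn hgt).elim
  refine ⟨fun r => ?_, h0⟩
  have := WSol.uniq ha h.toWSol h.refl.toWSol 0 (by simp only [neg_zero]; linarith) (by simp)
  have := congrFun this r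
  linarith
end

section
/- Let a > 0, let φ₁ : ℝ → ℝ be a 1-kink, and let H(r) = 2·arctan(exp(√2·r)). Then the linearization potentials satisfy the strict pointwise inequality −4·sin²(φ₁(r)) + a²/(r²+a²)² > −4·sin²(H(r)) for every r ∈ ℝ. -/
open Real Filter

/-- A kink written as a first-order system. -/
structure Kink (a : ℝ) (f p : ℝ → ℝ) : Prop where
  ha : 0 < a
  d1 : ∀ r, HasDerivAt f (p r) r
  d2 : ∀ r, HasDerivAt p (sin (2 * f r) - (2 * r / (r ^ 2 + a ^ 2)) * p r) r
  bot : Tendsto f atBot (nhds 0)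
  top : Tendsto f atTop (nhds π)

namespace Kink

variable {a : ℝ} {f p : ℝ → ℝ}

theorem refl (k : Kink a f p) : Kink a (fun r => π - f (-r)) (fun r => p (-r)) where
  ha := k.ha
  d1 r := by
    have h := ((k.d1 (-r)).comp r (hasDerivAt_neg r)).const_sub π
    refine HasDerivAt.congr_deriv h ?_
    ring
  d2 r := by
    have h := (k.d2 (-r)).comp r (hasDerivAt_neg r)
    refine HasDerivAt.congr_deriv h ?_
    have : sin (2 * (π - f (-r))) = - sin (2 * f (-r)) := by
      rw [show 2 * (π - f (-r)) = 2 * π - 2 * f (-r) by ring, sin_two_pi_sub]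
    rw [this]
    ring
  bot := by
    have := (k.top.comp tendsto_neg_atBot_atTop).const_sub π
    simpa using this
  top := by
    have := (k.bot.comp tendsto_neg_atTop_atBot).const_sub π
    simpa using this

theorem dE (k : Kink a f p) (r : ℝ) :
    HasDerivAt (fun r => p r ^ 2 / 2 - sin (f r) ^ 2) (-(2 * r / (r ^ 2 + a ^ 2)) * p r ^ 2) r := by
  have h := (((k.d2 r).pow 2).div_const 2).sub (((k.d1 r).sin).pow 2)
  refine HasDerivAt.congr_deriv h ?_
  rw [sin_two_mul]
  push_cast
  ring

theorem E_mono (k : Kink a f p) :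
    MonotoneOn (fun r => p r ^ 2 / 2 - sin (f r) ^ 2) (Set.Iic 0) := by
  refine monotoneOn_of_deriv_nonneg (convex_Iic 0)
    (fun r _ => (k.dE r).continuousAt.continuousWithinAt)
    (fun r _ => (k.dE r).differentiableAt.differentiableWithinAt) ?_
  intro r hr
  rw [interior_Iic] at hr
  rw [(k.dE r).deriv]
  have hr' : r < 0 := hr
  have : 2 * r / (r ^ 2 + a ^ 2) ≤ 0 := div_nonpos_of_nonpos_of_nonneg (by linarith) (by positivity)
  nlinarith [sq_nonneg (p r)]

theorem E_nonneg_left (k : Kink a f p) {r : ℝ} (hr : r ≤ 0) :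
    2 * sin (f r) ^ 2 ≤ p r ^ 2 := by
  have h1 : Tendsto (fun s => - sin (f s) ^ 2) atBot (nhds 0) := by
    have := (((continuous_sin.tendsto 0).comp k.bot).pow 2).neg
    simpa using this
  have h2 : (0:ℝ) ≤ p r ^ 2 / 2 - sin (f r) ^ 2 := by
    refine le_of_tendsto h1 ?_
    filter_upwards [eventually_le_atBot r] with s hs
    have := k.E_mono (show s ∈ Set.Iic (0:ℝ) from hs.trans hr) hr hs
    simp only at this
    nlinarith [sq_nonneg (p s)]
  linarith

theorem E_nonneg (k : Kink a f p) (r : ℝ) : 2 * sin (f r) ^ 2 ≤ p r ^ 2 := by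
  rcases le_total r 0 with hr | hr
  · exact k.E_nonneg_left hr
  · have := k.refl.E_nonneg_left (r := -r) (by linarith)
    simpa [sin_pi_sub] using this

theorem h_bound (k : Kink a f p) (r : ℝ) : |2 * r / (r ^ 2 + a ^ 2)| ≤ 1 / a := by
  have ha := k.ha
  have hp : 0 < r ^ 2 + a ^ 2 := by positivity
  rw [abs_le]
  constructor
  · rw [← neg_div, div_le_div_iff₀ ha hp]; nlinarith [sq_nonneg (r + a)]
  · rw [div_le_div_iff₀ hp ha]; nlinarith [sq_nonneg (r - a)]

theorem p_ne (k : Kink a f p) (r₀ : ℝ) : p r₀ ≠ 0 := by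
  intro h0
  have hs : sin (f r₀) = 0 := by
    have := k.E_nonneg r₀
    rw [h0] at this
    have : sin (f r₀) ^ 2 = 0 := le_antisymm (by linarith) (sq_nonneg _)
    exact pow_eq_zero_iff (two_ne_zero) |>.1 this
  obtain ⟨n, hn⟩ := sin_eq_zero_iff.1 hs
  set c := f r₀ with hc
  have ha := k.ha
  set C : ℝ := 3 + 2 / a with hC
  set N : ℝ → ℝ := fun r => (f r - c) ^ 2 + p r ^ 2 with hN
  set N' : ℝ → ℝ := fun r => 2 * (f r - c) * p r +
    2 * p r * (sin (2 * f r) - (2 * r / (r ^ 2 + a ^ 2)) * p r) with hN'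
  have dN : ∀ r, HasDerivAt N (N' r) r := by
    intro r
    have h := (((k.d1 r).sub_const c).pow 2).add ((k.d2 r).pow 2)
    refine HasDerivAt.congr_deriv h ?_
    simp only [hN']
    push_cast
    ring
  have bN : ∀ r, |N' r| ≤ C * N r := by
    intro r
    have h1 : sin (2 * f r) = sin (2 * (f r - c)) := by
      rw [← hn, show 2 * (f r - n * π) = 2 * f r - n * (2 * π) by ring, sin_sub_int_mul_two_pi]
    have h2 : |sin (2 * f r)| ≤ 2 * |f r - c| := by
      rw [h1]
      refine (abs_sin_le_abs).trans ?_
      rw [abs_mul]; norm_num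
    have h3 := k.h_bound r
    simp only [hN', hN]
    set x := f r - c
    set q := p r
    set h := 2 * r / (r ^ 2 + a ^ 2)
    set s := sin (2 * f r)
    have e1 : |2 * x * q + 2 * q * (s - h * q)| ≤ 2 * |x| * |q| + 2 * |q| * |s| + 2 * |h| * |q| ^ 2 := by
      have t1 : |2 * x * q| = 2 * |x| * |q| := by rw [abs_mul, abs_mul]; norm_num
      have t2 : |2 * q * s| = 2 * |q| * |s| := by rw [abs_mul, abs_mul]; norm_num
      have t3 : |2 * h * q ^ 2| = 2 * |h| * |q| ^ 2 := by rw [abs_mul, abs_mul, abs_pow]; norm_num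
      rw [← t1, ← t2, ← t3, show 2 * x * q + 2 * q * (s - h * q) = 2 * x * q + 2 * q * s - 2 * h * q ^ 2 by ring]
      exact (abs_sub _ _).trans (add_le_add (abs_add_le _ _) le_rfl)
    refine e1.trans ?_
    have e2 : 2 * |q| * |s| ≤ 2 * |q| * (2 * |x|) := by gcongr
    have e3 : 2 * |h| * |q| ^ 2 ≤ 2 * (1 / a) * |q| ^ 2 := by gcongr
    have e4 : 0 ≤ 2 / a * |x| ^ 2 := by positivity
    rw [← sq_abs x, ← sq_abs q, hC]
    have e5 : 2 * (1 / a) * |q| ^ 2 = 2 / a * |q| ^ 2 := by ring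
    nlinarith [sq_nonneg (|x| - |q|)]
  have N0 : N r₀ = 0 := by simp [hN, h0, hc]
  have Nz : ∀ r, N r = 0 := by
    intro r
    refine le_antisymm ?_ (by positivity)
    rcases le_total r₀ r with hr | hr
    · have : Antitone (fun r => N r * exp (-C * r)) := by
        refine antitone_of_hasDerivAt_nonpos
          (f' := fun r => N' r * exp (-C * r) + N r * (exp (-C * r) * (-C))) ?_ ?_
        · intro r
          have := ((hasDerivAt_id r).const_mul (-C)).exp
          refine HasDerivAt.congr_deriv ((dN r).mul this) ?_
          simp
        · intro r
          have := (abs_le.1 (bN r)).2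
          have := exp_pos (-C * r)
          simp only [Pi.zero_apply]
          nlinarith
      have := this hr
      simp only [N0, zero_mul] at this
      exact nonpos_of_mul_nonpos_left this (exp_pos _)
    · have : Monotone (fun r => N r * exp (C * r)) := by
        refine monotone_of_hasDerivAt_nonneg
          (f' := fun r => N' r * exp (C * r) + N r * (exp (C * r) * C)) ?_ ?_
        · intro r
          have := ((hasDerivAt_id r).const_mul (C)).exp
          refine HasDerivAt.congr_deriv ((dN r).mul this) ?_
          simp
        · intro r
          have := (abs_le.1 (bN r)).1
          have := exp_pos (C * r)
          simp only [Pi.zero_apply]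
          nlinarith
      have := this hr
      simp only [N0, zero_mul] at this
      exact nonpos_of_mul_nonpos_left this (exp_pos _)
  have fc : f = fun _ => c := by
    funext r
    have := Nz r
    simp only [hN] at this
    nlinarith [sq_nonneg (f r - c), sq_nonneg (p r)]
  have b := k.bot
  have t := k.top
  rw [fc] at b t
  have b' := tendsto_nhds_unique b tendsto_const_nhds
  have t' := tendsto_nhds_unique t tendsto_const_nhds
  linarith [pi_pos]

theorem p_cont (k : Kink a f p) : Continuous p :=
  continuous_iff_continuousAt.2 fun r => (k.d2 r).continuousAt

theorem f_cont (k : Kink a f p) : Continuous f :=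
  continuous_iff_continuousAt.2 fun r => (k.d1 r).continuousAt

theorem p_pos (k : Kink a f p) (r : ℝ) : 0 < p r := by
  by_contra hr
  have hall : ∀ s, p s ≤ 0 := by
    intro s
    by_contra hs
    push Not at hs hr
    obtain ⟨x, hx⟩ := mem_range_of_exists_le_of_exists_ge k.p_cont ⟨r, hr⟩ ⟨s, hs.le⟩
    exact k.p_ne x hx
  have anti : Antitone f := antitone_of_hasDerivAt_nonpos k.d1 hall
  have h1 := anti.le_of_tendsto k.top 0
  have h2 := anti.ge_of_tendsto k.bot 0
  linarith [pi_pos]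

theorem mono (k : Kink a f p) : StrictMono f :=
  strictMono_of_hasDerivAt_pos k.d1 k.p_pos

theorem f_pos (k : Kink a f p) (r : ℝ) : 0 < f r :=
  lt_of_le_of_lt (k.mono.monotone.le_of_tendsto k.bot (r - 1)) (k.mono (by linarith))

theorem f_lt (k : Kink a f p) (r : ℝ) : f r < π :=
  lt_of_lt_of_le (k.mono (by linarith)) (k.mono.monotone.ge_of_tendsto k.top (r + 1))

theorem p_ge (k : Kink a f p) (r : ℝ) : √2 * sin (f r) ≤ p r := by
  have h1 := k.E_nonneg r
  refine abs_le_of_sq_le_sq' (a := √2 * sin (f r)) ?_ (k.p_pos r).le |>.2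
  rw [mul_pow, sq_sqrt (by norm_num)]
  exact h1

theorem decay (k : Kink a f p) (h0 : π / 2 ≤ f 0) {r : ℝ} (hr : 0 ≤ r) :
    π - f r ≤ 2 * exp (-(1 / 2) * r) := by
  have anti : AntitoneOn (fun r => (π - f r) * exp (1 / 2 * r)) (Set.Ici 0) := by
    have dd : ∀ r, HasDerivAt (fun r => (π - f r) * exp (1 / 2 * r))
        (- p r * exp (1 / 2 * r) + (π - f r) * (exp (1 / 2 * r) * (1 / 2))) r := by
      intro r
      have := ((hasDerivAt_id r).const_mul (1 / 2 : ℝ)).exp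
      refine HasDerivAt.congr_deriv (((k.d1 r).const_sub π).mul this) ?_
      simp
    refine antitoneOn_of_deriv_nonpos (convex_Ici 0)
      (fun r _ => (dd r).continuousAt.continuousWithinAt)
      (fun r _ => (dd r).differentiableAt.differentiableWithinAt) ?_
    intro r hr
    rw [interior_Ici] at hr
    have hr' : 0 < r := hr
    rw [(dd r).deriv]
    have h1 := k.mono hr'
    have h2 := k.f_lt r
    have h3 := mul_le_sin (x := π - f r) (by linarith) (by linarith)
    rw [sin_pi_sub] at h3
    have h4 := k.p_ge r
    have h5 : 1 ≤ √2 := by rw [one_le_sqrt]; norm_num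
    have h6 : 1 / 2 * (π - f r) ≤ 2 / π * (π - f r) := by
      have : 1 / 2 ≤ 2 / π := by
        rw [div_le_div_iff₀ (by norm_num) pi_pos]; linarith [pi_le_four]
      exact mul_le_mul_of_nonneg_right this (by linarith)
    have h7 : 1 / 2 * (π - f r) ≤ p r := by nlinarith
    have := exp_pos (1 / 2 * r)
    nlinarith
  have := anti (Set.self_mem_Ici) hr hr
  simp only [mul_zero, exp_zero, mul_one] at this
  have e : exp (1 / 2 * r) * exp (-(1 / 2) * r) = 1 := by
    rw [← exp_add]; simp
  have h2 : (π - f r) * exp (1 / 2 * r) ≤ 2 := by linarith [pi_le_four]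
  calc π - f r = ((π - f r) * exp (1 / 2 * r)) * exp (-(1 / 2) * r) := by
        rw [mul_assoc, e, mul_one]
    _ ≤ _ := mul_le_mul_of_nonneg_right h2 (exp_pos _).le

theorem p_anti (k : Kink a f p) (h0 : π / 2 ≤ f 0) : AntitoneOn p (Set.Ici 0) := by
  refine antitoneOn_of_deriv_nonpos (convex_Ici 0)
      (fun r _ => (k.d2 r).continuousAt.continuousWithinAt)
      (fun r _ => (k.d2 r).differentiableAt.differentiableWithinAt) ?_
  intro r hr
  rw [interior_Ici] at hr
  have hr' : 0 < r := hr
  rw [(k.d2 r).deriv, sin_two_mul]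
  have h1 := k.mono hr'
  have h2 := k.f_lt r
  have h3 : 0 < sin (f r) := sin_pos_of_pos_of_lt_pi (k.f_pos r) h2
  have h4 : cos (f r) ≤ 0 := cos_nonpos_of_pi_div_two_le_of_le (by linarith) (by linarith)
  have h5 : 0 ≤ 2 * r / (r ^ 2 + a ^ 2) * p r :=
    mul_nonneg (by positivity) (k.p_pos r).le
  nlinarith

theorem p_decay (k : Kink a f p) (h0 : π / 2 ≤ f 0) {r : ℝ} (hr : 1 ≤ r) :
    p r ≤ 2 * exp (-(1 / 2) * (r - 1)) := by
  obtain ⟨c, hc, hc'⟩ := exists_hasDerivAt_eq_slope f p (show r - 1 < r by linarith)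
    k.f_cont.continuousOn (fun x _ => k.d1 x)
  have h1 := k.p_anti h0 (show c ∈ Set.Ici (0:ℝ) from by
    have := hc.1; show 0 ≤ c; linarith) (show r ∈ Set.Ici (0:ℝ) from by show 0 ≤ r; linarith) hc.2.le
  have h2 := k.decay h0 (r := r - 1) (by linarith)
  have h3 := k.f_lt r
  rw [show r - (r - 1) = 1 by ring, div_one] at hc'
  linarith

theorem pow_decay (k : Kink a f p) (h0 : π / 2 ≤ f 0) :
    Tendsto (fun r => (r ^ 2 + a ^ 2) ^ 2 * p r ^ 2) atTop (nhds 0) := by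
  have t : ∀ n : ℕ, Tendsto (fun r : ℝ => r ^ n * exp (-r)) atTop (nhds 0) := fun n =>
    tendsto_pow_mul_exp_neg_atTop_nhds_zero n
  have T : Tendsto (fun r : ℝ => 4 * exp 1 * (r ^ 4 * exp (-r) + 2 * a ^ 2 * (r ^ 2 * exp (-r))
      + a ^ 4 * (r ^ 0 * exp (-r)))) atTop (nhds 0) := by
    have := ((((t 4).add ((t 2).const_mul (2 * a ^ 2))).add ((t 0).const_mul (a ^ 4))).const_mul
      (4 * exp 1))
    simpa using this
  refine squeeze_zero' (Eventually.of_forall fun r => by positivity) ?_ T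
  filter_upwards [eventually_ge_atTop 1] with r hr
  have h1 := k.p_decay h0 hr
  have h2 : p r ^ 2 ≤ (2 * exp (-(1 / 2) * (r - 1))) ^ 2 :=
    pow_le_pow_left₀ (k.p_pos r).le h1 2
  have h3 : (2 * exp (-(1 / 2) * (r - 1))) ^ 2 = 4 * exp 1 * exp (-r) := by
    rw [mul_pow, ← exp_nat_mul, mul_assoc, ← exp_add]
    norm_num
    ring
  rw [h3] at h2
  calc (r ^ 2 + a ^ 2) ^ 2 * p r ^ 2 ≤ (r ^ 2 + a ^ 2) ^ 2 * (4 * exp 1 * exp (-r)) := by gcongr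
    _ = _ := by ring

theorem dG (k : Kink a f p) (r : ℝ) :
    HasDerivAt (fun r => (r ^ 2 + a ^ 2) ^ 2 * (p r ^ 2 / 2 - sin (f r) ^ 2))
      (-(4 * r * (r ^ 2 + a ^ 2)) * sin (f r) ^ 2) r := by
  have h := (((((hasDerivAt_id r).pow 2).add_const (a ^ 2)).pow 2).mul (k.dE r))
  have ha := k.ha
  have hp : r ^ 2 + a ^ 2 ≠ 0 := by positivity
  refine HasDerivAt.congr_deriv h ?_
  simp
  field_simp
  ring

theorem mid_le (k : Kink a f p) : f 0 ≤ π / 2 := by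
  by_contra hlt
  push Not at hlt
  have k' := k.refl
  set v : ℝ → ℝ := fun r => π - f (-r) with hv
  set q : ℝ → ℝ := fun r => p (-r) with hq
  have v0 : v 0 = π - f 0 := by simp [hv]
  have q0 : q 0 = p 0 := by simp [hq]
  have ha := k.ha
  have cmp : ∀ r, 0 < r → v r < f r → sin (f r) ^ 2 < sin (v r) ^ 2 := by
    intro r hr hlt'
    have hs : 0 < sin (f r) := sin_pos_of_pos_of_lt_pi (k.f_pos r) (k.f_lt r)
    refine pow_lt_pow_left₀ ?_ hs.le two_ne_zero
    have hfr := k.mono hr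
    have hfl := k.f_lt r
    have hvr := k'.mono hr
    have := k'.f_pos 0
    rw [← sin_pi_sub (f r)]
    rcases le_total (v r) (π / 2) with h | h
    · exact sin_lt_sin_of_lt_of_le_pi_div_two (by linarith) h (by linarith)
    · rw [← sin_pi_sub (v r)]
      exact sin_lt_sin_of_lt_of_le_pi_div_two (by linarith) (by linarith) (by linarith)
  set F : ℝ → ℝ := fun r => (r ^ 2 + a ^ 2) ^ 2 * (q r ^ 2 / 2 - sin (v r) ^ 2) -
    (r ^ 2 + a ^ 2) ^ 2 * (p r ^ 2 / 2 - sin (f r) ^ 2) with hF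
  have dF : ∀ r, HasDerivAt F (-(4 * r * (r ^ 2 + a ^ 2)) * sin (v r) ^ 2 -
      -(4 * r * (r ^ 2 + a ^ 2)) * sin (f r) ^ 2) r := fun r => (k'.dG r).sub (k.dG r)
  have F0 : F 0 = 0 := by
    simp only [hF, v0, q0, sin_pi_sub]; ring
  have Fanti : ∀ R, (∀ r, 0 < r → r < R → v r < f r) → StrictAntiOn F (Set.Icc 0 R) := by
    intro R hR
    refine strictAntiOn_of_deriv_neg (convex_Icc 0 R)
      (fun r _ => (dF r).continuousAt.continuousWithinAt) ?_
    intro r hr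
    rw [interior_Icc] at hr
    rw [(dF r).deriv]
    have h1 := cmp r hr.1 (hR r hr.1 hr.2)
    have h2 : 0 < 4 * r * (r ^ 2 + a ^ 2) := by have := hr.1; positivity
    nlinarith
  have noc : ∀ r, 0 ≤ r → v r < f r := by
    by_contra hcon
    push Not at hcon
    obtain ⟨r₁, hr₁, hc₁⟩ := hcon
    have hcomp : IsCompact (Set.Icc 0 r₁ ∩ {r | f r ≤ v r}) :=
      isCompact_Icc.inter_right (isClosed_le k.f_cont k'.f_cont)
    obtain ⟨r₀, hr₀, hmin⟩ := hcomp.exists_isLeast ⟨r₁, ⟨hr₁, le_rfl⟩, hc₁⟩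
    have hle : f r₀ ≤ v r₀ := hr₀.2
    have hpos : 0 < r₀ := by
      rcases eq_or_lt_of_le hr₀.1.1 with h | h
      · rw [← h, v0] at hle; linarith
      · exact h
    have hbef : ∀ r, 0 < r → r < r₀ → v r < f r := by
      intro r h1 h2
      by_contra h3
      push Not at h3
      have := hmin ⟨⟨h1.le, h2.le.trans hr₀.1.2⟩, h3⟩
      linarith
    have hev : ∀ᶠ r in nhdsWithin r₀ (Set.Iio r₀), v r < f r := by
      filter_upwards [Ioo_mem_nhdsLT hpos] with r hr
      exact hbef r hr.1 hr.2
    have heq : f r₀ = v r₀ := by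
      refine le_antisymm hle ?_
      exact le_of_tendsto_of_tendsto (k'.f_cont.continuousWithinAt) (k.f_cont.continuousWithinAt)
        (hev.mono fun _ h => h.le)
    have hder : p r₀ ≤ q r₀ := by
      have hd := ((k.d1 r₀).sub (k'.d1 r₀)).hasDerivWithinAt (s := Set.Iio r₀)
      rw [hasDerivWithinAt_iff_tendsto_slope' (by simp)] at hd
      have : p r₀ - q r₀ ≤ 0 := by
        refine le_of_tendsto hd ?_
        filter_upwards [hev, self_mem_nhdsWithin] with r h1 h2
        have h2' : r < r₀ := h2
        rw [slope_def_field]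
        refine div_nonpos_of_nonneg_of_nonpos ?_ (by linarith)
        simp only [Pi.sub_apply]
        linarith
      linarith
    have h1 := Fanti r₀ hbef (Set.left_mem_Icc.2 hpos.le) (Set.right_mem_Icc.2 hpos.le) hpos
    rw [F0] at h1
    simp only [hF, heq] at h1
    have h2 : p r₀ ^ 2 ≤ q r₀ ^ 2 := pow_le_pow_left₀ (k.p_pos r₀).le hder 2
    have h3 : 0 ≤ (r₀ ^ 2 + a ^ 2) ^ 2 * (q r₀ ^ 2 - p r₀ ^ 2) :=
      mul_nonneg (by positivity) (by linarith)
    nlinarith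
  have F1 : F 1 < 0 := by
    have := Fanti 1 (fun r h _ => noc r h.le) (Set.left_mem_Icc.2 zero_le_one)
      (Set.right_mem_Icc.2 zero_le_one) one_pos
    rwa [F0] at this
  have lim := (k.pow_decay hlt.le).neg
  rw [neg_zero] at lim
  have : (0:ℝ) ≤ F 1 := by
    refine le_of_tendsto lim ?_
    filter_upwards [eventually_gt_atTop 1] with r hr
    have h1 := Fanti r (fun r h _ => noc r h.le) (show (1:ℝ) ∈ _ from ⟨zero_le_one, hr.le⟩)
      (Set.right_mem_Icc.2 (by linarith)) hr
    refine le_trans ?_ h1.le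
    have h2 := k'.E_nonneg r
    have h3 : 0 ≤ (r ^ 2 + a ^ 2) ^ 2 * (q r ^ 2 / 2 - sin (v r) ^ 2) :=
      mul_nonneg (by positivity) (by linarith)
    have h4 : 0 ≤ (r ^ 2 + a ^ 2) ^ 2 * sin (f r) ^ 2 := by positivity
    have h5 : 0 ≤ (r ^ 2 + a ^ 2) ^ 2 * p r ^ 2 := by positivity
    simp only [hF]
    nlinarith
  linarith

theorem mid (k : Kink a f p) : f 0 = π / 2 := by
  have h1 := k.mid_le
  have h2 := k.refl.mid_le
  simp only [neg_zero] at h2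
  linarith

theorem tan_mono (k : Kink a f p) : Monotone (fun r => tan (f r / 2) * exp (-√2 * r)) := by
  have hc : ∀ r, 0 < cos (f r / 2) := fun r =>
    cos_pos_of_mem_Ioo ⟨by linarith [k.f_pos r, pi_pos], by linarith [k.f_lt r]⟩
  refine monotone_of_hasDerivAt_nonneg
    (f' := fun r => (1 / cos (f r / 2) ^ 2 * (p r / 2)) * exp (-√2 * r) +
      tan (f r / 2) * (exp (-√2 * r) * (-√2))) ?_ ?_
  · intro r
    have h1 := (hasDerivAt_tan (hc r).ne').comp r ((k.d1 r).div_const 2)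
    have h2 := ((hasDerivAt_id r).const_mul (-√2)).exp
    refine HasDerivAt.congr_deriv (h1.mul h2) ?_
    simp
  · intro r
    have h1 := k.p_ge r
    have h2 := hc r
    have h3 := exp_pos (-√2 * r)
    have h4 : sin (f r) = 2 * sin (f r / 2) * cos (f r / 2) := by
      rw [← sin_two_mul]; congr 1; ring
    have h5 : √2 * tan (f r / 2) ≤ 1 / cos (f r / 2) ^ 2 * (p r / 2) := by
      rw [h4] at h1
      rw [tan_eq_sin_div_cos]
      have : 1 / cos (f r / 2) ^ 2 * (p r / 2) - √2 * (sin (f r / 2) / cos (f r / 2)) =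
        (p r - √2 * (2 * sin (f r / 2) * cos (f r / 2))) / (2 * cos (f r / 2) ^ 2) := by
        field_simp
      have h6 : 0 ≤ (p r - √2 * (2 * sin (f r / 2) * cos (f r / 2))) / (2 * cos (f r / 2) ^ 2) :=
        div_nonneg (by linarith) (by positivity)
      linarith
    simp only [Pi.zero_apply]
    nlinarith

theorem arctan_tan_half (k : Kink a f p) (r : ℝ) : 2 * arctan (tan (f r / 2)) = f r := by
  rw [arctan_tan (by linarith [k.f_pos r, pi_pos]) (by linarith [k.f_lt r])]
  ring

theorem sin_le (k : Kink a f p) (r : ℝ) :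
    sin (f r) ≤ sin (2 * arctan (exp (√2 * r))) := by
  have t0 : tan (f 0 / 2) = 1 := by
    rw [k.mid, show π / 2 / 2 = π / 4 by ring, tan_pi_div_four]
  have e : exp (-√2 * r) * exp (√2 * r) = 1 := by rw [← exp_add]; simp
  have hp := exp_pos (√2 * r)
  have hm := exp_pos (-√2 * r)
  have h4 := k.arctan_tan_half r
  have hl := arctan_lt_pi_div_two (exp (√2 * r))
  have hg : 0 < arctan (exp (√2 * r)) := arctan_pos.2 hp
  have s2 : 0 ≤ √2 := sqrt_nonneg 2
  rcases le_total 0 r with hr | hr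
  · have h1 := k.tan_mono hr
    simp only [t0, mul_zero, exp_zero, mul_one] at h1
    have h2 : exp (√2 * r) ≤ tan (f r / 2) := by nlinarith
    have h3 := arctan_strictMono.monotone h2
    have h5 : π / 4 ≤ arctan (exp (√2 * r)) := by
      rw [← arctan_one]
      exact arctan_strictMono.monotone (one_le_exp (by positivity))
    rw [← sin_pi_sub (f r), ← sin_pi_sub (2 * _)]
    exact sin_le_sin_of_le_of_le_pi_div_two (by linarith [k.f_lt r]) (by linarith) (by linarith)
  · have h1 := k.tan_mono hr
    simp only [t0, mul_zero, exp_zero, mul_one] at h1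
    have h2 : tan (f r / 2) ≤ exp (√2 * r) := by nlinarith
    have h3 := arctan_strictMono.monotone h2
    have h5 : arctan (exp (√2 * r)) ≤ π / 4 := by
      rw [← arctan_one]
      exact arctan_strictMono.monotone (exp_le_one_iff.2 (by nlinarith))
    exact sin_le_sin_of_le_of_le_pi_div_two (by linarith [k.f_pos r]) (by linarith) (by linarith)

end Kink

/-- Pointwise comparison of the linearization potentials:
`−4·sin²(φ₁(r)) + a²/(r²+a²)² > −4·sin²(H(r))` for every `r`. -/
theorem potential_comparison (a : ℝ) (ha : 0 < a) (φ₁ H : ℝ → ℝ)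
    (hH : ∀ r, H r = 2 * Real.arctan (Real.exp (Real.sqrt 2 * r)))
    (hφ : ContDiff ℝ 2 φ₁)
    (hφeq : ∀ r : ℝ, deriv (deriv φ₁) r + (2 * r / (r ^ 2 + a ^ 2)) * deriv φ₁ r
        = Real.sin (2 * φ₁ r))
    (hbot : Tendsto φ₁ atBot (nhds 0))
    (htop : Tendsto φ₁ atTop (nhds Real.pi)) :
    ∀ r : ℝ, -4 * Real.sin (H r) ^ 2
      < -4 * Real.sin (φ₁ r) ^ 2 + a ^ 2 / (r ^ 2 + a ^ 2) ^ 2 := by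
  have k : Kink a φ₁ (deriv φ₁) := by
    refine ⟨ha, fun r => (hφ.differentiable (by norm_num) r).hasDerivAt, fun r => ?_, hbot, htop⟩
    have h1 : ContDiff ℝ 1 (deriv φ₁) := by
      have : ContDiff ℝ (1 + 1) φ₁ := by
        convert hφ using 1
        norm_num
      exact (contDiff_succ_iff_deriv.1 this).2.2
    have := (h1.differentiable (by norm_num) r).hasDerivAt
    refine HasDerivAt.congr_deriv this ?_
    linarith [hφeq r]
  intro r
  have h1 := k.sin_le r
  rw [← hH] at h1
  have h2 : 0 < sin (φ₁ r) := sin_pos_of_pos_of_lt_pi (k.f_pos r) (k.f_lt r)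
  have h3 : sin (φ₁ r) ^ 2 ≤ sin (H r) ^ 2 := pow_le_pow_left₀ h2.le h1 2
  have h4 : 0 < a ^ 2 / (r ^ 2 + a ^ 2) ^ 2 := by positivity
  linarith
end
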